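/- There exists an absolute constant C > 0 such that for every prime power q and all integers n ≥ m ≥ √(10·n·log n), writing u = n/m, one has | p_{n,m,q} / ( p_{n,m} · G_q(e^{ξ(u)/m}) ) − 1 | ≤ C·log(u+1) / ( m·q^{⌈(m+1)/2⌉} ). -/

import Mathlib

open Real

noncomputable section

/-- Predicate characterizing the Dickman function `ρ : [0,∞) → (0,∞)`:
continuous on `[0,∞)`, positive, equal to `1` on `[0,1]`, and satisfying the
delay differential equation `t·ρ'(t) + ρ(t-1) = 0` for `t > 1`. -/
def IsDickman (ρ : ℝ → ℝ) : Prop :=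
  ContinuousOn ρ (Set.Ici 0) ∧
  (∀ t : ℝ, 0 ≤ t → 0 < ρ t) ∧
  (∀ t ∈ Set.Icc (0:ℝ) 1, ρ t = 1) ∧
  (∀ t : ℝ, 1 < t → HasDerivAt ρ (-(ρ (t - 1)) / t) t)

/-- `ξ(u)`: for `u > 1`, the unique positive solution of `e^ξ = 1 + u·ξ`; otherwise `0`. -/
def xi (u : ℝ) : ℝ :=
  open Classical in
  if h : ∃ x : ℝ, 0 < x ∧ Real.exp x = 1 + u * x then h.choose else 0

/-- `p_{n,m}`: probability that a uniformly random permutation of `{1,…,n}` is `m`-friable,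
i.e. has no cycle of length greater than `m`. -/
def permProb (n m : ℕ) : ℝ :=
  (Nat.card {σ : Equiv.Perm (Fin n) // ∀ c ∈ σ.cycleType, c ≤ m} : ℝ) /
    (Nat.factorial n : ℝ)

/-- `p_{n,m,q}`: proportion of monic polynomials of degree `n` over a finite field `F`
(of cardinality `q`) that are `m`-friable, i.e. all of whose monic irreducible factors
have degree at most `m`. -/
def polyProb (F : Type) [Field F] [Fintype F] (n m : ℕ) : ℝ :=
  (Nat.card {f : Polynomial F // f.Monic ∧ f.natDegree = n ∧
      ∀ p : Polynomial F, p.Monic → Irreducible p → p ∣ f → p.natDegree ≤ m} : ℝ) /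
    (Fintype.card F : ℝ) ^ n

/-- `F_q(z) = ∏_{deg P ≤ m} (1 - (z/q)^{deg P})⁻¹`, the product over monic irreducible
polynomials `P` over `F` of degree at most `m`. -/
def FqFun (F : Type) [Field F] [Fintype F] (m : ℕ) (z : ℝ) : ℝ :=
  ∏ᶠ p ∈ {p : Polynomial F | p.Monic ∧ Irreducible p ∧ p.natDegree ≤ m},
    (1 - (z / (Fintype.card F : ℝ)) ^ p.natDegree)⁻¹

/-- `G_q(z) = F_q(z) · exp(-∑_{i=1}^m z^i/i)`. -/
def Gq (F : Type) [Field F] [Fintype F] (m : ℕ) (z : ℝ) : ℝ :=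
  FqFun F m z * Real.exp (-(∑ i ∈ Finset.Icc 1 m, z ^ i / (i : ℝ)))

/-- The coefficients `d_{m,i}`. -/
def dcoef (m i : ℕ) : ℝ :=
  if i = m then -(1 / (m : ℝ)) * ∑ j ∈ Finset.Icc 2 m, (1 : ℝ) / (j : ℝ)
  else Real.Gamma ((i : ℝ) + (i : ℝ) / (m : ℝ)) /
    (((m : ℝ) - (i : ℝ)) * (Nat.factorial i : ℝ) * Real.Gamma (1 + (i : ℝ) / (m : ℝ)))

/-- `T(s) = ∫₀^s ((e^t - 1)/t)·((t/m)/(1 - e^{-t/m}) - 1) dt`, integrand extended by `0` at `t = 0`. -/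
def Tfun (m : ℕ) (s : ℝ) : ℝ :=
  ∫ t in (0:ℝ)..s,
    if t = 0 then 0 else
      ((Real.exp t - 1) / t) * ((t / (m : ℝ)) / (1 - Real.exp (-t / (m : ℝ))) - 1)

end

/-! Let `g = ∑ gⱼ zʲ` be the quotient of the generating functions of `m`-friable polynomials and
of `m`-friable permutations, so that `g(z) = G_q(z)`, `p_{n,m,q} = ∑ gⱼ p_{n-j,m}` and
`p_{n,m,q} / p_{n,m} - G_q(z) = ∑ gⱼ (p_{n-j,m} / p_{n,m} - zʲ)`. By Gauss's formula
`∑_{deg P ∣ i} deg P = qⁱ` over monic irreducible `P`, the logarithmic derivative of `g` has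
nonnegative coefficients, those of index at most `m` being zero and that of index `i > m` being
`O(q^{-⌈i/2⌉})`. Hence `g₀ = 1`, `gⱼ = 0` for `1 ≤ j ≤ m`, all `gⱼ ≥ 0`, and `∑_{j > m} gⱼ (5/4)ʲ`
is `O((5/4)ᵐ / (m q^{⌈(m+1)/2⌉}))`. It remains to show that `p_{n-j,m} / p_{n,m}` is close to `zʲ`
for `z = e^{ξ(u)/m}`: the ratios `p_{k,m} / p_{k+1,m}` increase with `k`, and the identity
`n p_{n,m} = ∑_{1 ≤ i ≤ m} p_{n-i,m}` traps them between solutions of equations `z + ⋯ + zᵐ = k`,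
which are compared with `ξ` through the function `(eˢ - 1) / s`. -/

namespace Friable

/-! ### The function `ξ` -/

lemma convexOn_sinh : ConvexOn ℝ (Set.Ici 0) sinh := by
  refine convexOn_of_deriv2_nonneg (convex_Ici 0) continuous_sinh.continuousOn
    differentiable_sinh.differentiableOn ?_ fun x hx => ?_
  · rw [Real.deriv_sinh]
    exact differentiable_cosh.differentiableOn
  · rw [interior_Ici] at hx
    simpa using (Set.mem_Ioi.1 hx).le

lemma sinh_mul_le_sinh_mul {a b : ℝ} (ha : 0 < a) (hab : a ≤ b) : sinh a * b ≤ sinh b * a := by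
  have hb : 0 < b := ha.trans_le hab
  have h := convexOn_sinh.2 hb.le Set.self_mem_Ici (div_pos ha hb).le
    (sub_nonneg.2 ((div_le_one hb).2 hab)) (add_sub_cancel _ _)
  simp only [smul_eq_mul, mul_zero, add_zero, sinh_zero, div_mul_cancel₀ _ hb.ne'] at h
  rwa [div_mul_eq_mul_div, le_div_iff₀ hb, mul_comm a] at h

/-- The slope `(e^s - 1)/s` of the chord of `exp` over `[0, s]`, so that `ξ(u)` is the positive
solution of `expSlope s = u`. At `s = 0` it has the junk value `0` rather than the limit `1`. -/
noncomputable def expSlope (s : ℝ) : ℝ := (exp s - 1) / s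

lemma expSlope_eq_sinh (s : ℝ) : expSlope s = exp (s / 2) * (sinh (s / 2) / (s / 2)) := by
  have hsq : exp s = exp (s / 2) * exp (s / 2) := by rw [← exp_add, add_halves]
  have hinv : exp (s / 2) * exp (-(s / 2)) = 1 := by rw [← exp_add, add_neg_cancel, exp_zero]
  rw [expSlope, sinh_eq, hsq, ← hinv]
  ring

lemma expSlope_mul_exp_le {a b : ℝ} (ha : 0 < a) (hab : a ≤ b) :
    expSlope a * exp ((b - a) / 2) ≤ expSlope b := by
  have hb : 0 < b := ha.trans_le hab
  have hexp : exp (a / 2) * exp ((b - a) / 2) = exp (b / 2) := by rw [← exp_add]; ring_nf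
  have hsinh : sinh (a / 2) / (a / 2) ≤ sinh (b / 2) / (b / 2) := by
    rw [div_le_div_iff₀ (half_pos ha) (half_pos hb)]
    exact sinh_mul_le_sinh_mul (half_pos ha) (by linarith)
  rw [expSlope_eq_sinh, expSlope_eq_sinh, mul_right_comm, hexp]
  gcongr

lemma expSlope_pos {s : ℝ} (hs : 0 < s) : 0 < expSlope s :=
  div_pos (sub_pos.2 (one_lt_exp_iff.2 hs)) hs

lemma le_add_of_expSlope_le {a b δ : ℝ} (ha : 0 < a) (hδ : 0 ≤ δ)
    (h : expSlope b ≤ expSlope a * exp δ) : b ≤ a + 2 * δ := by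
  rcases le_total b a with hba | hab
  · linarith
  · have := le_of_mul_le_mul_left ((expSlope_mul_exp_le ha hab).trans h) (expSlope_pos ha)
    rw [exp_le_exp] at this
    linarith

lemma xi_one : xi 1 = 0 := by
  refine dif_neg ?_
  rintro ⟨x, hx, h⟩
  linarith [add_one_lt_exp hx.ne']

lemma exists_exp_eq_one_add_mul {u : ℝ} (hu : 1 < u) : ∃ x, 0 < x ∧ exp x = 1 + u * x := by
  have hu0 : 0 < u := by linarith
  have hcont : ContinuousOn (fun x => exp x - (1 + u * x)) (Set.Icc (log u) (2 * u)) := by fun_prop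
  have hleft : exp (log u) - (1 + u * log u) ≤ 0 := by
    have := mul_le_mul_of_nonneg_left (one_sub_inv_le_log_of_pos hu0) hu0.le
    rw [mul_sub, mul_inv_cancel₀ hu0.ne'] at this
    rw [exp_log hu0]
    linarith
  have hright : 0 ≤ exp (2 * u) - (1 + u * (2 * u)) := by
    nlinarith [quadratic_le_exp_of_nonneg (show 0 ≤ 2 * u by positivity)]
  obtain ⟨x, hx, hx0⟩ := intermediate_value_Icc (by linarith [log_le_sub_one_of_pos hu0]) hcont
    ⟨hleft, hright⟩
  exact ⟨x, (log_pos hu).trans_le hx.1, sub_eq_zero.1 hx0⟩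

lemma xi_spec {u : ℝ} (hu : 1 < u) : 0 < xi u ∧ exp (xi u) = 1 + u * xi u := by
  have h := exists_exp_eq_one_add_mul hu
  rw [xi, dif_pos h]
  exact h.choose_spec

lemma xi_pos {u : ℝ} (hu : 1 < u) : 0 < xi u := (xi_spec hu).1

lemma expSlope_xi {u : ℝ} (hu : 1 < u) : expSlope (xi u) = u := by
  rw [expSlope, (xi_spec hu).2, add_sub_cancel_left, mul_div_cancel_right₀ _ (xi_pos hu).ne']

lemma xi_le_of_le_expSlope {u s : ℝ} (hu : 1 < u) (hs : 0 < s) (h : u ≤ expSlope s) :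
    xi u ≤ s := by
  simpa using le_add_of_expSlope_le hs le_rfl (b := xi u) (by simpa [expSlope_xi hu] using h)

lemma exp_xi_div_le {u : ℝ} (hu : 1 < u) : exp (xi u) / u ≤ 4 * log (u + 1) := by
  have hlog : log 2 ≤ log (u + 1) := log_le_log (by norm_num) (by linarith)
  have hlog_le : log (u + 1) ≤ log 2 + (u - 1) / 2 := by
    have := log_le_sub_one_of_pos (show 0 < (u + 1) / 2 by linarith)
    rw [log_div (by linarith) (by norm_num)] at this
    linarith
  have hxi : xi u ≤ 2 * log (u + 1) := by
    refine xi_le_of_le_expSlope hu (by linarith [log_two_gt_d9]) ?_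
    rw [expSlope, le_div_iff₀ (by linarith [log_two_gt_d9]), two_mul (log (u + 1)), exp_add,
      exp_log (by linarith)]
    nlinarith [log_two_lt_d9]
  rw [(xi_spec hu).2, div_le_iff₀ (by linarith)]
  nlinarith [log_two_gt_d9]

section GeometricSum

variable {m : ℕ} {s : ℝ}

lemma geom_sum_exp_mul (hm : 0 < m) :
    (∑ i ∈ Finset.range m, exp (s / m) ^ (i + 1)) * (exp (s / m) - 1) =
      exp (s / m) * (exp s - 1) := by
  have hpow : exp (s / m) ^ m = exp s := by
    rw [← exp_nat_mul, mul_div_cancel₀ _ (by positivity)]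
  simp_rw [pow_succ', ← Finset.mul_sum]
  rw [mul_assoc, geom_sum_mul, hpow]

lemma mul_expSlope_eq : m * expSlope s = (exp s - 1) / (s / m) := by
  rw [expSlope, div_div_eq_mul_div, mul_comm, div_mul_eq_mul_div]

lemma mul_expSlope_le_geom_sum (hm : 0 < m) (hs : 0 < s) :
    m * expSlope s ≤ ∑ i ∈ Finset.range m, exp (s / m) ^ (i + 1) := by
  have hsm : 0 < s / m := by positivity
  have hinv : exp (s / m) * (1 - s / m) ≤ 1 := by
    calc exp (s / m) * (1 - s / m) ≤ exp (s / m) * exp (-(s / m)) := by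
          gcongr
          exact one_sub_le_exp_neg _
      _ = 1 := by rw [← exp_add, add_neg_cancel, exp_zero]
  rw [mul_expSlope_eq,
    eq_div_of_mul_eq (sub_pos.2 (one_lt_exp_iff.2 hsm)).ne' (geom_sum_exp_mul hm),
    div_le_div_iff₀ hsm (sub_pos.2 (one_lt_exp_iff.2 hsm))]
  nlinarith [one_lt_exp_iff.2 hs]

lemma geom_sum_le_mul_expSlope (hm : 0 < m) (hs : 0 < s) :
    ∑ i ∈ Finset.range m, exp (s / m) ^ (i + 1) ≤ m * (expSlope s * exp (s / m)) := by
  have hsm : 0 < s / m := by positivity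
  rw [← mul_assoc, mul_expSlope_eq, mul_comm,
    eq_div_of_mul_eq (sub_pos.2 (one_lt_exp_iff.2 hsm)).ne' (geom_sum_exp_mul hm), mul_div_assoc]
  gcongr
  · exact sub_nonneg.2 (one_le_exp hs.le)
  · exact le_sub_iff_add_le.2 (add_one_le_exp _)

end GeometricSum

/-! ### Logarithmic derivatives and values of power series -/

section PowerSeries

open PowerSeries Finset.HasAntidiagonal

section LogDeriv

variable {R : Type*} [CommRing R] {A B L M : R⟦X⟧}

/-- `L` is the logarithmic derivative `X A' / A` of `A`, normalised so that the logarithmic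
derivative of `exp (∑ cᵢ Xⁱ)` is `∑ i cᵢ Xⁱ`. -/
def HasLogDeriv (A L : R⟦X⟧) : Prop := X * d⁄dX R A = L * A

lemma HasLogDeriv.one : HasLogDeriv (1 : R⟦X⟧) 0 := by simp [HasLogDeriv]

lemma HasLogDeriv.mul (hA : HasLogDeriv A L) (hB : HasLogDeriv B M) :
    HasLogDeriv (A * B) (L + M) := by
  unfold HasLogDeriv at *
  rw [Derivation.leibniz, smul_eq_mul, smul_eq_mul]
  linear_combination A * hB + B * hA

lemma HasLogDeriv.prod {ι : Type*} {S : Finset ι} {A L : ι → R⟦X⟧}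
    (h : ∀ i ∈ S, HasLogDeriv (A i) (L i)) : HasLogDeriv (∏ i ∈ S, A i) (∑ i ∈ S, L i) := by
  classical
  induction S using Finset.induction_on with
  | empty => exact .one
  | insert i S hi ih =>
    rw [Finset.prod_insert hi, Finset.sum_insert hi]
    exact (h i (S.mem_insert_self i)).mul (ih fun j hj => h j (Finset.mem_insert_of_mem hj))

lemma HasLogDeriv.expand {d : ℕ} (hd : d ≠ 0) (h : HasLogDeriv A L) :
    HasLogDeriv (expand d hd A) (d • expand d hd L) := by
  have hpow : X ^ d = X * X ^ (d - 1) := (mul_pow_sub_one hd (X : R⟦X⟧)).symm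
  have hXA : X ^ d * PowerSeries.expand d hd (d⁄dX R A) =
      PowerSeries.expand d hd L * PowerSeries.expand d hd A := by
    rw [← map_mul, ← h, map_mul, expand_X]
  rw [HasLogDeriv, expand_apply d hd A, derivative_subst (HasSubst.X_pow hd), derivative_pow,
    derivative_X, ← expand_apply d hd, ← expand_apply d hd A, nsmul_eq_mul]
  rw [hpow] at hXA
  linear_combination (d : R⟦X⟧) * hXA

lemma coeff_X_mul_derivative (A : R⟦X⟧) (n : ℕ) : coeff n (X * d⁄dX R A) = n * coeff n A := by
  cases n with
  | zero => simp
  | succ n => rw [coeff_succ_X_mul, coeff_derivative, mul_comm, Nat.cast_succ]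

lemma HasLogDeriv.coeff_eq (h : HasLogDeriv A L) (n : ℕ) :
    n * coeff n A = ∑ ij ∈ antidiagonal n, coeff ij.1 L * coeff ij.2 A := by
  rw [← coeff_X_mul_derivative, h, coeff_mul]

end LogDeriv

section Real

variable {A B L M : ℝ⟦X⟧}

lemma HasLogDeriv.coeff_nonneg (h : HasLogDeriv A L) (hA : 0 ≤ coeff 0 A) (hL0 : coeff 0 L = 0)
    (hL : ∀ i, 0 ≤ coeff i L) (n : ℕ) : 0 ≤ coeff n A := by
  induction n using Nat.strong_induction_on with
  | _ n ih =>
    rcases n.eq_zero_or_pos with rfl | hn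
    · exact hA
    · refine nonneg_of_mul_nonneg_right (a := (n : ℝ)) ?_ (mod_cast hn)
      rw [h.coeff_eq]
      refine Finset.sum_nonneg fun ij hij => ?_
      rw [mem_antidiagonal] at hij
      rcases ij.1.eq_zero_or_pos with h0 | hpos
      · rw [h0, hL0, zero_mul]
      · exact mul_nonneg (hL _) (ih _ (by omega))

lemma HasLogDeriv.coeff_eq_zero (h : HasLogDeriv A L) {m j : ℕ} (hL : ∀ i ≤ m, coeff i L = 0)
    (hj : 0 < j) (hjm : j ≤ m) : coeff j A = 0 := by
  have hsum := h.coeff_eq j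
  rw [Finset.sum_eq_zero fun ij hij => ?_] at hsum
  · exact (mul_eq_zero.1 hsum).resolve_left (mod_cast hj.ne')
  · rw [hL _ ((antidiagonal.fst_le hij).trans hjm), zero_mul]

/-- The power series `A` converges at `y`, with sum `a`. -/
def EvalsTo (A : ℝ⟦X⟧) (y a : ℝ) : Prop := HasSum (fun n => coeff n A * y ^ n) a

namespace EvalsTo

variable {y a b : ℝ}

protected lemma mul (hA : EvalsTo A y a) (hB : EvalsTo B y b) : EvalsTo (A * B) y (a * b) := by
  have hcoeff : (fun n => coeff n (A * B) * y ^ n) = fun n =>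
      ∑ ij ∈ antidiagonal n, (coeff ij.1 A * y ^ ij.1) * (coeff ij.2 B * y ^ ij.2) := by
    ext n
    rw [coeff_mul, Finset.sum_mul]
    refine Finset.sum_congr rfl fun ij hij => ?_
    rw [← mem_antidiagonal.1 hij, pow_add]
    ring
  have hsum := summable_norm_sum_mul_antidiagonal_of_summable_norm hA.summable.norm
    hB.summable.norm
  rw [EvalsTo, hcoeff, ← hA.tsum_eq, ← hB.tsum_eq,
    tsum_mul_tsum_eq_tsum_sum_antidiagonal_of_summable_norm hA.summable.norm hB.summable.norm]
  exact hsum.of_norm.hasSum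

protected lemma one : EvalsTo 1 y 1 := by
  have h := hasSum_single (f := fun n => coeff n (1 : ℝ⟦X⟧) * y ^ n) 0 fun n hn => by
    simp [coeff_one, hn]
  simpa [EvalsTo] using h

protected lemma prod {ι : Type*} {S : Finset ι} {A : ι → ℝ⟦X⟧} {a : ι → ℝ}
    (h : ∀ i ∈ S, EvalsTo (A i) y (a i)) : EvalsTo (∏ i ∈ S, A i) y (∏ i ∈ S, a i) := by
  classical
  induction S using Finset.induction_on with
  | empty => exact .one
  | insert i S hi ih =>
    rw [Finset.prod_insert hi, Finset.prod_insert hi]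
    exact (h i (S.mem_insert_self i)).mul (ih fun j hj => h j (Finset.mem_insert_of_mem hj))

protected lemma expand {d : ℕ} (hd : d ≠ 0) (h : EvalsTo A (y ^ d) a) :
    EvalsTo (expand d hd A) y a := by
  rw [EvalsTo, ← (mul_right_injective₀ hd).hasSum_iff]
  · simpa [Function.comp_def, pow_mul, EvalsTo] using h
  · intro n hn
    rw [coeff_expand_of_not_dvd, zero_mul]
    rintro ⟨k, rfl⟩
    exact hn ⟨k, rfl⟩

lemma coeff_zero_le (h : EvalsTo A y a) (hy : 0 ≤ y) (hA : ∀ n, 0 ≤ coeff n A) :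
    coeff 0 A ≤ a := by
  simpa using le_hasSum h 0 fun n _ => mul_nonneg (hA n) (pow_nonneg hy n)

protected lemma tail (h : EvalsTo A y a) :
    HasSum (fun n => if n = 0 then 0 else coeff n A * y ^ n) (a - coeff 0 A) := by
  refine (h.sub (hasSum_ite_eq 0 (coeff 0 A))).congr_fun fun n => ?_
  split_ifs with hn <;> simp [hn]

/-- As `A` has no terms of degree `1, …, m`, each term of `A y - A 0` is multiplied by more than `m`
in `X A' = L A`. -/
lemma mul_sub_le_of_hasLogDeriv {m : ℕ} {l : ℝ} (hA : EvalsTo A y a) (hL : EvalsTo L y l)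
    (h : HasLogDeriv A L) (hy : 0 ≤ y) (hA0 : ∀ n, 0 ≤ coeff n A) (hLm : ∀ i ≤ m, coeff i L = 0) :
    (m + 1) * (a - coeff 0 A) ≤ l * a := by
  refine hasSum_le (fun n => ?_) (hA.tail.mul_left ((m : ℝ) + 1)) (hL.mul hA)
  rw [← h, coeff_X_mul_derivative, mul_assoc]
  split_ifs with hn
  · simp [hn]
  · rcases le_or_gt n m with hnm | hnm
    · simp [h.coeff_eq_zero hLm (Nat.pos_of_ne_zero hn) hnm]
    · have := mul_nonneg (hA0 n) (pow_nonneg hy n)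
      gcongr
      exact_mod_cast hnm

lemma exists_le_of_coeff_le {m : ℕ} {K r : ℝ} (hA0 : ∀ n, 0 ≤ coeff n A)
    (hAm : ∀ i ≤ m, coeff i A = 0) (hAK : ∀ k, coeff (k + (m + 1)) A ≤ K * r ^ k)
    (hy : 0 ≤ y) (hr : 0 ≤ r) (hry : r * y < 1) :
    ∃ a, EvalsTo A y a ∧ a ≤ K * y ^ (m + 1) * (1 - r * y)⁻¹ := by
  have hgeom := (hasSum_geometric_of_lt_one (mul_nonneg hr hy) hry).mul_left (K * y ^ (m + 1))
  have hle (k : ℕ) : coeff (k + (m + 1)) A * y ^ (k + (m + 1)) ≤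
      K * y ^ (m + 1) * (r * y) ^ k :=
    calc _ ≤ K * r ^ k * y ^ (k + (m + 1)) :=
          mul_le_mul_of_nonneg_right (hAK k) (pow_nonneg hy _)
      _ = _ := by ring
  have hshift : Summable fun k => coeff (k + (m + 1)) A * y ^ (k + (m + 1)) :=
    .of_nonneg_of_le (fun k => mul_nonneg (hA0 _) (pow_nonneg hy _)) hle hgeom.summable
  have hhead : ∑ i ∈ Finset.range (m + 1), coeff i A * y ^ i = 0 :=
    Finset.sum_eq_zero fun i hi => by rw [hAm i (Finset.mem_range_succ_iff.1 hi), zero_mul]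
  refine ⟨_, ?_, hasSum_le hle hshift.hasSum hgeom⟩
  simpa [EvalsTo, hhead] using
    (hasSum_nat_add_iff (f := fun i => coeff i A * y ^ i) (m + 1)).1 hshift.hasSum

end EvalsTo

end Real

end PowerSeries

/-! ### The generating function of friable permutations -/

section CycleType

open Multiset

lemma parts_eq_filter_add_replicate {n : ℕ} (p : n.Partition) :
    p.parts = p.parts.filter (2 ≤ ·) + replicate (n - (p.parts.filter (2 ≤ ·)).sum) 1 := by
  have hones : p.parts.filter (¬ 2 ≤ ·) = p.parts.filter (· = 1) :=
    filter_congr fun i hi => by have := p.parts_pos hi; omega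
  have hsplit := filter_add_not (2 ≤ ·) p.parts
  rw [hones, filter_eq'] at hsplit
  have hsum := congrArg sum hsplit
  rw [sum_add, sum_replicate, p.parts_sum, smul_eq_mul, mul_one] at hsum
  rw [show n - (p.parts.filter (2 ≤ ·)).sum = p.parts.count 1 by omega, hsplit]

variable {α : Type*} [Fintype α] [DecidableEq α]

lemma partition_eq_iff (σ : Equiv.Perm α) (p : (Fintype.card α).Partition) :
    σ.partition = p ↔ σ.cycleType = p.parts.filter (2 ≤ ·) := by
  refine ⟨fun h => ?_, fun h => Nat.Partition.ext ?_⟩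
  · rw [← h, Equiv.Perm.filter_parts_partition_eq_cycleType]
  · rw [Equiv.Perm.parts_partition, ← Equiv.Perm.sum_cycleType, h,
      ← parts_eq_filter_add_replicate]

lemma toFinsupp_prod_add_replicate {M : Type*} [CommMonoid M] {f : ℕ → ℕ → M}
    (hf : ∀ i, f i 0 = 1) {s : Multiset ℕ} {a : ℕ} (ha : a ∉ s) (k : ℕ) :
    (toFinsupp (s + replicate k a)).prod f = (toFinsupp s).prod f * f a k := by
  have hdisj : Disjoint (toFinsupp s).support (Finsupp.single a k).support :=
    Finset.disjoint_of_subset_right Finsupp.support_single_subset (by simpa using ha)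
  have hsingle : toFinsupp (replicate k a) = Finsupp.single a k := by
    rw [toFinsupp_eq_iff, Finsupp.toMultiset_single, nsmul_singleton]
  rw [toFinsupp_add, hsingle, Finsupp.prod_add_index_of_disjoint hdisj,
    Finsupp.prod_single_index (hf a)]

lemma prod_mul_prod_factorial_count (s : Multiset ℕ) :
    s.prod * ∏ i ∈ s.toFinset, (s.count i).factorial =
      (toFinsupp s).prod fun i c => i ^ c * c.factorial := by
  rw [Finset.prod_multiset_count, ← Finset.prod_mul_distrib]
  simp [Finsupp.prod]

lemma card_partition_eq_mul (p : (Fintype.card α).Partition) :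
    Finset.card {σ : Equiv.Perm α | σ.partition = p} *
      (toFinsupp p.parts).prod (fun i c => i ^ c * c.factorial) = (Fintype.card α).factorial := by
  have hle : (p.parts.filter (2 ≤ ·)).sum ≤ Fintype.card α := by
    conv_rhs => rw [← p.parts_sum, parts_eq_filter_add_replicate p, sum_add]
    exact Nat.le_add_right _ _
  have hcard := Equiv.Perm.card_of_cycleType_mul_eq α (p.parts.filter (2 ≤ ·))
  rw [if_pos ⟨hle, fun a ha => (mem_filter.1 ha).2⟩, mul_assoc, mul_comm (Nat.factorial _),
    prod_mul_prod_factorial_count] at hcard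
  simp_rw [partition_eq_iff]
  rw [parts_eq_filter_add_replicate p, toFinsupp_prod_add_replicate (by simp) (by simp),
    one_pow, one_mul, ← parts_eq_filter_add_replicate p, hcard]

end CycleType

section GeneratingFunction

open PowerSeries

/-- The power series `exp (c (X + X² / 2 + ⋯ + Xᵐ / m))`, whose coefficients for `c = 1` are the
proportions of `m`-friable permutations. -/
noncomputable def expPartial (m : ℕ) (c : ℝ) : ℝ⟦X⟧ := ∏ i ∈ Finset.range m,
  expand (i + 1) i.succ_ne_zero (rescale (c / (i + 1 : ℝ)) (PowerSeries.exp ℝ))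

lemma hasLogDeriv_rescale_exp (c : ℝ) :
    HasLogDeriv (rescale c (PowerSeries.exp ℝ)) (c • (X : ℝ⟦X⟧)) := by
  ext n
  rw [coeff_X_mul_derivative, smul_mul_assoc, coeff_smul]
  cases n with
  | zero => simp
  | succ n =>
    rw [coeff_succ_X_mul, coeff_rescale, coeff_rescale, coeff_exp, coeff_exp]
    simp [Nat.factorial_succ, pow_succ]
    field_simp

lemma hasLogDeriv_expPartial (m : ℕ) (c : ℝ) :
    HasLogDeriv (expPartial m c) (∑ i ∈ Finset.range m, c • (X : ℝ⟦X⟧) ^ (i + 1)) := by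
  refine HasLogDeriv.prod fun i _ => ?_
  convert (hasLogDeriv_rescale_exp (c / (i + 1 : ℝ))).expand i.succ_ne_zero using 1
  rw [map_smul, expand_X, ← Nat.cast_smul_eq_nsmul ℝ, smul_smul, Nat.cast_succ,
    mul_div_cancel₀ c (Nat.cast_add_one_ne_zero i)]

lemma evalsTo_rescale_exp (c y : ℝ) :
    EvalsTo (rescale c (PowerSeries.exp ℝ)) y (Real.exp (c * y)) := by
  rw [EvalsTo, Real.exp_eq_exp_ℝ]
  refine (NormedSpace.expSeries_div_hasSum_exp (c * y)).congr_fun fun n => ?_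
  rw [coeff_rescale, coeff_exp, mul_pow]
  simp [div_eq_mul_inv]
  ring

lemma evalsTo_expPartial (m : ℕ) (c y : ℝ) : EvalsTo (expPartial m c) y
    (Real.exp (c * ∑ i ∈ Finset.range m, y ^ (i + 1) / (i + 1))) := by
  rw [Finset.mul_sum, Real.exp_sum]
  refine EvalsTo.prod fun i _ => ?_
  convert (evalsTo_rescale_exp (c / (i + 1 : ℝ)) (y ^ (i + 1))).expand i.succ_ne_zero using 2
  ring

lemma expPartial_mul_expPartial_neg (m : ℕ) (c : ℝ) :
    expPartial m c * expPartial m (-c) = 1 := by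
  rw [expPartial, expPartial, ← Finset.prod_mul_distrib]
  refine Finset.prod_eq_one fun i _ => ?_
  rw [← map_mul, exp_mul_exp_eq_exp_add, neg_div, add_neg_cancel]
  simp

/-- The weight `1 / (iᶜ c!)` of `c` cycles of length `i` in Cauchy's formula for the proportion of
permutations of a given cycle type, set to `0` for `i > m` so as to keep `m`-friable ones only. -/
noncomputable def cycleWeight (m i c : ℕ) : ℝ := if i ≤ m then (i ^ c * c.factorial : ℝ)⁻¹ else 0

lemma cycleWeight_prod_eq {m n : ℕ} (p : n.Partition) :
    p.parts.toFinsupp.prod (cycleWeight m) = if ∀ i ∈ p.parts, i ≤ m then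
      ((p.parts.toFinsupp.prod fun i c => i ^ c * c.factorial : ℕ) : ℝ)⁻¹ else 0 := by
  split_ifs with h
  · simp only [Finsupp.prod, Nat.cast_prod, ← Finset.prod_inv_distrib]
    refine Finset.prod_congr rfl fun i hi => ?_
    rw [cycleWeight, if_pos (h i (by simpa using hi))]
    push_cast
    rfl
  · push Not at h
    obtain ⟨i, hi, him⟩ := h
    exact Finset.prod_eq_zero (i := i) (by simpa using hi) (if_neg him.not_ge)

lemma forall_cycleType_le_iff {α : Type*} [Fintype α] [DecidableEq α] {m : ℕ} (hm : 0 < m)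
    (σ : Equiv.Perm α) : (∀ c ∈ σ.cycleType, c ≤ m) ↔ ∀ c ∈ σ.partition.parts, c ≤ m := by
  rw [Equiv.Perm.parts_partition]
  refine ⟨fun h c hc => ?_, fun h c hc => h c (Multiset.mem_add.2 (.inl hc))⟩
  rcases Multiset.mem_add.1 hc with hc | hc
  · exact h c hc
  · rwa [Multiset.eq_of_mem_replicate hc]

lemma card_friable_div_factorial (α : Type*) [Fintype α] [DecidableEq α] {m : ℕ} (hm : 0 < m) :
    (Nat.card {σ : Equiv.Perm α // ∀ c ∈ σ.cycleType, c ≤ m} : ℝ) / (Fintype.card α).factorial =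
      coeff (Fintype.card α) (Nat.Partition.genFun (cycleWeight m)) := by
  simp_rw [forall_cycleType_le_iff hm]
  rw [Nat.card_eq_fintype_card, Fintype.card_subtype, Nat.Partition.coeff_genFun,
    Finset.card_eq_sum_card_fiberwise (f := Equiv.Perm.partition) (t := Finset.univ) (by simp),
    Nat.cast_sum, Finset.sum_div]
  refine Finset.sum_congr rfl fun p _ => ?_
  rw [cycleWeight_prod_eq, Finset.filter_filter]
  split_ifs with hp
  · have hfiber (σ : Equiv.Perm α) :
        ((∀ c ∈ σ.partition.parts, c ≤ m) ∧ σ.partition = p) ↔ σ.partition = p :=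
      and_iff_right_of_imp fun h => h ▸ hp
    simp_rw [hfiber]
    have hcard : (_ : ℝ) = _ := congrArg Nat.cast (card_partition_eq_mul p)
    rw [← hcard, Nat.cast_mul, div_mul_cancel_left₀]
    have hpos := (Fintype.card α).factorial_pos
    rw [← card_partition_eq_mul p] at hpos
    exact_mod_cast (Nat.pos_of_mul_pos_right hpos).ne'
  · have hempty : Finset.filter (fun σ : Equiv.Perm α =>
        (∀ c ∈ σ.partition.parts, c ≤ m) ∧ σ.partition = p) Finset.univ = ∅ :=
      Finset.filter_false_of_mem fun σ _ h => hp (h.2 ▸ h.1)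
    rw [hempty, Finset.card_empty, Nat.cast_zero, zero_div]

section Topology

open scoped PowerSeries.WithPiTopology

lemma hasSum_coeff_smul_X_pow_expand {R : Type*} [CommRing R] [TopologicalSpace R]
    {d : ℕ} (hd : d ≠ 0) (A : R⟦X⟧) :
    HasSum (fun j => coeff j A • (X : R⟦X⟧) ^ (d * j)) (expand d hd A) := by
  have h := hasSum_of_monomials_self (expand d hd A)
  rw [← (mul_right_injective₀ hd).hasSum_iff] at h
  · refine h.congr_fun fun j => ?_
    rw [Function.comp_apply, coeff_expand_mul, X_pow_eq, ← map_smul, smul_eq_mul, mul_one]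
  · intro n hn
    rw [coeff_expand_of_not_dvd, map_zero]
    rintro ⟨k, rfl⟩
    exact hn ⟨k, rfl⟩

lemma one_add_tsum_cycleWeight {m i : ℕ} (hi : i < m) :
    1 + ∑' j, cycleWeight m (i + 1) (j + 1) • (X : ℝ⟦X⟧) ^ ((i + 1) * (j + 1)) =
      expand (i + 1) i.succ_ne_zero (rescale (1 / (i + 1 : ℝ)) (PowerSeries.exp ℝ)) := by
  have hweight (j : ℕ) : coeff j (rescale (1 / (i + 1 : ℝ)) (PowerSeries.exp ℝ)) =
      cycleWeight m (i + 1) j := by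
    rw [cycleWeight, if_pos (Nat.succ_le_iff.2 hi), coeff_rescale, coeff_exp]
    simp [mul_comm]
  have h := hasSum_coeff_smul_X_pow_expand i.succ_ne_zero
    (rescale (1 / (i + 1 : ℝ)) (PowerSeries.exp ℝ))
  simp_rw [hweight] at h
  rw [← h.tsum_eq, h.summable.tsum_eq_zero_add]
  simp [cycleWeight, Nat.succ_le_iff.2 hi]

lemma genFun_cycleWeight (m : ℕ) : Nat.Partition.genFun (cycleWeight m) = expPartial m 1 := by
  have htrivial (i : ℕ) (hi : i ∉ Finset.range m) :
      1 + ∑' j, cycleWeight m (i + 1) (j + 1) • (X : ℝ⟦X⟧) ^ ((i + 1) * (j + 1)) = 1 := by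
    have him : ¬ i + 1 ≤ m := by simpa using hi
    simp [cycleWeight, him]
  rw [(Nat.Partition.hasProd_genFun (cycleWeight m)).unique
    (hasProd_prod_of_ne_finset_one htrivial)]
  exact Finset.prod_congr rfl fun i hi => one_add_tsum_cycleWeight (Finset.mem_range.1 hi)

end Topology

lemma permProb_eq_coeff {m : ℕ} (hm : 0 < m) (n : ℕ) :
    permProb n m = coeff n (expPartial m 1) := by
  simpa [permProb, genFun_cycleWeight] using card_friable_div_factorial (Fin n) hm

end GeneratingFunction

/-! ### Ratios of consecutive friable permutation probabilities -/

section Permutation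

variable {m n : ℕ}

lemma permProb_pos (n m : ℕ) : 0 < permProb n m := by
  have : Nonempty {σ : Equiv.Perm (Fin n) // ∀ c ∈ σ.cycleType, c ≤ m} := ⟨1, by simp⟩
  exact div_pos (mod_cast Nat.card_pos) (mod_cast n.factorial_pos)

lemma permProb_eq_one (h : n ≤ m) : permProb n m = 1 := by
  have hall (σ : Equiv.Perm (Fin n)) : ∀ c ∈ σ.cycleType, c ≤ m := fun c hc =>
    (Equiv.Perm.le_card_support_of_mem_cycleType hc).trans
      ((Finset.card_le_univ _).trans (by simpa using h))
  rw [permProb, Nat.card_congr (Equiv.subtypeUnivEquiv hall), Nat.card_perm, Nat.card_fin]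
  exact div_self (mod_cast n.factorial_ne_zero)

lemma mul_permProb_eq_sum (hm : 0 < m) (h : m ≤ n) :
    n * permProb n m = ∑ i ∈ Finset.range m, permProb (n - 1 - i) m := by
  simp_rw [permProb_eq_coeff hm]
  rw [← coeff_X_mul_derivative, hasLogDeriv_expPartial, Finset.sum_mul, map_sum]
  refine Finset.sum_congr rfl fun i hi => ?_
  have hin : i + 1 ≤ n := (Finset.mem_range.1 hi).trans_le h
  rw [one_smul, PowerSeries.coeff_X_pow_mul', if_pos hin, Nat.sub_sub, add_comm 1 i]

lemma mul_permProb_sub_permProb_succ (hm : 0 < m) (k : ℕ) :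
    (k + m + 1 : ℝ) * (permProb (k + m) m - permProb (k + m + 1) m) = permProb k m := by
  have h₀ := mul_permProb_eq_sum hm (Nat.le_add_left m k)
  have h₁ := mul_permProb_eq_sum hm (Nat.le_succ_of_le (Nat.le_add_left m k))
  have hsum := Finset.sum_range_succ (fun i => permProb (k + m - i) m) m
  rw [Finset.sum_range_succ'] at hsum
  simp only [Nat.succ_eq_add_one, Nat.add_sub_cancel, Nat.sub_zero] at h₁ hsum
  simp_rw [Nat.sub_sub, add_comm 1] at h₀
  push_cast at h₀ h₁
  linarith

lemma permProb_succ_lt (hm : 0 < m) (h : m ≤ n) : permProb (n + 1) m < permProb n m := by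
  obtain ⟨k, rfl⟩ := Nat.exists_eq_add_of_le' h
  have hpos := permProb_pos k m
  rw [← mul_permProb_sub_permProb_succ hm] at hpos
  exact sub_pos.1 (pos_of_mul_pos_right hpos (by positivity))

lemma permProb_succ_le (hm : 0 < m) (n : ℕ) : permProb (n + 1) m ≤ permProb n m := by
  rcases le_or_gt m n with h | h
  · exact (permProb_succ_lt hm h).le
  · rw [permProb_eq_one h, permProb_eq_one h.le]

/-- The ratio of the friable permutation probabilities for `n` and `n + 1`; it increases with `n`
and is close to the saddle point `exp (xi (n / m) / m)`. -/
noncomputable def permRatio (n m : ℕ) : ℝ := permProb n m / permProb (n + 1) m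

lemma permProb_eq_permRatio_mul (n m : ℕ) :
    permProb n m = permRatio n m * permProb (n + 1) m :=
  (div_mul_cancel₀ _ (permProb_pos _ _).ne').symm

lemma one_le_permRatio (hm : 0 < m) (n : ℕ) : 1 ≤ permRatio n m :=
  (one_le_div (permProb_pos _ _)).2 (permProb_succ_le hm n)

lemma one_lt_permRatio (hm : 0 < m) (h : m ≤ n) : 1 < permRatio n m :=
  (one_lt_div (permProb_pos _ _)).2 (permProb_succ_lt hm h)

lemma succ_mul_permProb_mul_le (hm : 0 < m) {k : ℕ}
    (hk : ∀ i < m, permRatio k m ≤ permRatio (k + i) m) :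
    (k + m + 1) * permProb (k + m + 1) m * permProb k m ≤
      (k + m) * permProb (k + m) m * permProb (k + 1) m := by
  have h₀ := mul_permProb_eq_sum hm (Nat.le_add_left m k)
  have h₁ := mul_permProb_eq_sum hm (Nat.le_succ_of_le (Nat.le_add_left m k))
  push_cast at h₀ h₁
  rw [h₀, h₁, Finset.sum_mul, Finset.sum_mul]
  refine Finset.sum_le_sum fun i hi => ?_
  have him := Finset.mem_range.1 hi
  have hratio := hk (m - 1 - i) (by omega)
  rw [permRatio, permRatio, div_le_div_iff₀ (permProb_pos _ _) (permProb_pos _ _)] at hratio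
  rw [show k + m - i = k + (m - 1 - i) + 1 by omega,
    show k + m - 1 - i = k + (m - 1 - i) by omega]
  linarith

lemma permRatio_monotone (hm : 0 < m) : Monotone fun n => permRatio n m := by
  refine monotone_nat_of_le_succ fun n => ?_
  induction n using Nat.strong_induction_on with
  | _ n ih =>
    rcases lt_or_ge n m with h | h
    · rw [permRatio, permProb_eq_one h, permProb_eq_one h.le, div_one]
      exact one_le_permRatio hm _
    obtain ⟨k, rfl⟩ := Nat.exists_eq_add_of_le' h
    have hk (i : ℕ) (hi : i ≤ m) : permRatio k m ≤ permRatio (k + i) m := by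
      induction i with
      | zero => exact le_rfl
      | succ i ihi => exact (ihi (by omega)).trans (ih (k + i) (by omega))
    have hprod := succ_mul_permProb_mul_le hm fun i hi => hk i hi.le
    have hdiff := mul_permProb_sub_permProb_succ hm (k + 1)
    rw [show k + 1 + m = k + m + 1 by ring] at hdiff
    push_cast at hdiff
    have hnonneg : 0 ≤ permProb (k + m) m * (permProb (k + m + 1) m - permProb (k + m + 2) m) :=
      mul_nonneg (permProb_pos _ _).le (sub_nonneg.2 (permProb_succ_le hm _))
    rw [← mul_permProb_sub_permProb_succ hm k, ← hdiff] at hprod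
    have hle : ((k + m + 1 : ℝ) ^ 2) *
          (permProb (k + m + 1) m * (permProb (k + m) m - permProb (k + m + 1) m)) ≤
        ((k + m + 1 : ℝ) ^ 2) *
          (permProb (k + m) m * (permProb (k + m + 1) m - permProb (k + m + 2) m)) := by
      linarith
    rw [permRatio, permRatio, div_le_div_iff₀ (permProb_pos _ _) (permProb_pos _ _)]
    linarith [le_of_mul_le_mul_left hle (by positivity)]

lemma permProb_le_permRatio_pow_mul (hm : 0 < m) (n j : ℕ) :
    permProb n m ≤ permRatio (n + j - 1) m ^ j * permProb (n + j) m := by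
  induction j with
  | zero => simp
  | succ j ih =>
    have hratio := one_le_permRatio hm (n + j - 1)
    have hmono : permRatio (n + j - 1) m ≤ permRatio (n + j) m :=
      permRatio_monotone hm (Nat.sub_le _ _)
    calc permProb n m ≤ permRatio (n + j - 1) m ^ j * permProb (n + j) m := ih
      _ ≤ permRatio (n + j) m ^ j * permProb (n + j) m := by
        have := permProb_pos (n + j) m
        gcongr
      _ = permRatio (n + (j + 1) - 1) m ^ (j + 1) * permProb (n + (j + 1)) m := by
        rw [permProb_eq_permRatio_mul (n + j)]
        simp only [← add_assoc, Nat.add_sub_cancel]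
        ring

lemma permRatio_pow_mul_le (hm : 0 < m) (n j : ℕ) :
    permRatio n m ^ j * permProb (n + j) m ≤ permProb n m := by
  induction j with
  | zero => simp
  | succ j ih =>
    have hmono : permRatio n m ≤ permRatio (n + j) m := permRatio_monotone hm (n.le_add_right j)
    have hratio := one_le_permRatio hm n
    refine le_trans ?_ ih
    rw [permProb_eq_permRatio_mul (n + j), pow_succ, mul_assoc, ← add_assoc]
    have := permProb_pos (n + j + 1) m
    gcongr

lemma succ_le_sum_permRatio_pow (hm : 0 < m) (h : m ≤ n + 1) :
    (n + 1 : ℝ) ≤ ∑ i ∈ Finset.range m, permRatio n m ^ (i + 1) := by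
  refine le_of_mul_le_mul_right ?_ (permProb_pos (n + 1) m)
  have hsum := mul_permProb_eq_sum hm h
  push_cast at hsum
  rw [hsum, Finset.sum_mul]
  refine Finset.sum_le_sum fun i hi => ?_
  have hi := Finset.mem_range.1 hi
  have hle := permProb_le_permRatio_pow_mul hm (n - i) (i + 1)
  rwa [show n - i + (i + 1) = n + 1 by omega, Nat.add_sub_cancel] at hle

lemma sum_permRatio_pow_le (hm : 0 < m) (n : ℕ) :
    ∑ i ∈ Finset.range m, permRatio n m ^ (i + 1) ≤ n + m := by
  refine le_of_mul_le_mul_right ?_ (permProb_pos (n + m) m)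
  have hsum := mul_permProb_eq_sum hm (Nat.le_add_left m n)
  push_cast at hsum
  rw [hsum, Finset.sum_mul]
  refine Finset.sum_le_sum fun i hi => ?_
  have hi := Finset.mem_range.1 hi
  have hle := permRatio_pow_mul_le hm (n + m - 1 - i) (i + 1)
  rw [show n + m - 1 - i + (i + 1) = n + m by omega] at hle
  have hratio := one_le_permRatio hm n
  have hmono : permRatio n m ≤ permRatio (n + m - 1 - i) m :=
    permRatio_monotone hm (by omega)
  have hpos := permProb_pos (n + m) m
  exact le_trans (by gcongr) hle

end Permutation

/-! ### The saddle point -/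

section SaddlePoint

variable {m n j : ℕ}

/-- The saddle point `exp (ξ(n / m) / m)`, at which the generating functions are evaluated. -/
noncomputable def saddlePoint (n m : ℕ) : ℝ := exp (xi (n / m) / m)

lemma saddlePoint_pos (n m : ℕ) : 0 < saddlePoint n m := exp_pos _

lemma one_lt_cast_div_cast (hm : 0 < m) (hmn : m < n) : (1 : ℝ) < n / m :=
  (one_lt_div (mod_cast hm)).2 (mod_cast hmn)

lemma saddlePoint_pow_self (hm : 0 < m) : saddlePoint n m ^ m = exp (xi (n / m)) := by
  rw [saddlePoint, ← exp_nat_mul, mul_div_cancel₀ _ (mod_cast hm.ne')]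

lemma exp_mul_log_permRatio_div (hm : 0 < m) (k : ℕ) :
    exp (m * log (permRatio k m) / m) = permRatio k m := by
  rw [mul_div_cancel_left₀ _ (mod_cast hm.ne' : (m : ℝ) ≠ 0),
    exp_log (zero_lt_one.trans_le (one_le_permRatio hm k))]

lemma mul_log_permRatio_pos (hm : 0 < m) {k : ℕ} (hk : m ≤ k) : 0 < m * log (permRatio k m) :=
  mul_pos (mod_cast hm) (log_pos (one_lt_permRatio hm hk))

lemma mul_log_permRatio_le (hm : 0 < m) (hmn : m < n) :
    m * log (permRatio (n - 1) m) ≤ xi (n / m) + 2 * (m / n) := by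
  have hn : 0 < n := hm.trans hmn
  have hu := one_lt_cast_div_cast hm hmn
  have hs := mul_log_permRatio_pos hm (Nat.le_sub_one_of_lt hmn)
  refine le_add_of_expSlope_le (xi_pos hu) (by positivity) ?_
  rw [expSlope_xi hu]
  have hsum := (mul_expSlope_le_geom_sum hm hs).trans_eq
    (by rw [exp_mul_log_permRatio_div hm]) |>.trans (sum_permRatio_pow_le hm (n - 1))
  have hpred : ((n - 1 : ℕ) : ℝ) ≤ n := mod_cast n.pred_le
  calc expSlope (m * log (permRatio (n - 1) m)) ≤ (n + m) / m := by
        rw [le_div_iff₀' (mod_cast hm)]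
        exact hsum.trans (by gcongr)
    _ = n / m * (m / n + 1) := by field_simp; ring
    _ ≤ n / m * exp (m / n) := by gcongr; exact add_one_le_exp _

lemma le_mul_log_permRatio (hm : 0 < m) (hj : m ≤ n - j) (hmn : m < n) :
    xi (n / m) * (1 - 2 / m) - 2 * (j / (n - j : ℕ)) ≤ m * log (permRatio (n - j) m) := by
  set k := n - j
  have hu := one_lt_cast_div_cast hm hmn
  set s := m * log (permRatio k m) with hs_def
  have hs : 0 < s := mul_log_permRatio_pos hm hj
  have hk0 : (0 : ℝ) < k := mod_cast hm.trans_le hj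
  have hnkj : (n : ℝ) = k * (j / k + 1) := by
    rw [mul_add, mul_div_cancel₀ _ hk0.ne', mul_one]
    exact_mod_cast (by omega : n = j + k)
  have hslope : (k : ℝ) / m ≤ expSlope s * exp (s / m) := by
    rw [div_le_iff₀' (mod_cast hm)]
    refine le_trans ?_ (geom_sum_le_mul_expSlope hm hs)
    rw [hs_def, exp_mul_log_permRatio_div hm]
    linarith [succ_le_sum_permRatio_pow hm (Nat.le_succ_of_le hj)]
  have hξ : xi (n / m) ≤ s + 2 * (s / m + j / k) := by
    refine le_add_of_expSlope_le hs (by positivity) ?_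
    calc expSlope (xi (n / m)) = k / m * (j / k + 1) := by
          rw [expSlope_xi hu, hnkj]; ring
      _ ≤ expSlope s * exp (s / m) * exp (j / k) := by
          have := (expSlope_pos hs).le
          gcongr
          exact add_one_le_exp _
      _ = expSlope s * exp (s / m + j / k) := by rw [exp_add]; ring
  rcases le_total s (xi (n / m)) with h | h
  · have : s / m ≤ xi (n / m) / m := by gcongr
    linarith [show xi (n / m) * (1 - 2 / m) = xi (n / m) - 2 * (xi (n / m) / m) by ring]
  · have hξ0 := xi_pos hu
    have h₁ : 0 ≤ xi (n / m) * (2 / m) := by positivity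
    have h₂ : (0 : ℝ) ≤ j / k := by positivity
    linarith

/-- The ratio `p_{n-j,m} / p_{n,m}`, read as `0` for `j > n`; it approximates the `j`-th power of
the saddle point. -/
noncomputable def shiftRatio (n m j : ℕ) : ℝ :=
  if j ≤ n then permProb (n - j) m / permProb n m else 0

lemma shiftRatio_nonneg (n m j : ℕ) : 0 ≤ shiftRatio n m j := by
  unfold shiftRatio
  split_ifs
  · exact (div_pos (permProb_pos _ _) (permProb_pos _ _)).le
  · exact le_rfl

lemma permRatio_pow_eq (hm : 0 < m) (k j : ℕ) :
    permRatio k m ^ j = exp (j / m * (m * log (permRatio k m))) := by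
  rw [← mul_assoc, div_mul_cancel₀ _ (mod_cast hm.ne' : (m : ℝ) ≠ 0), exp_nat_mul,
    exp_log (zero_lt_one.trans_le (one_le_permRatio hm k))]

lemma saddlePoint_pow_eq (n m j : ℕ) : saddlePoint n m ^ j = exp (j / m * xi (n / m)) := by
  rw [saddlePoint, ← exp_nat_mul]
  ring_nf

lemma shiftRatio_le (hm : 0 < m) (hmn : m < n) (hj : j ≤ n) :
    shiftRatio n m j ≤ saddlePoint n m ^ j * exp (2 * (j / n)) := by
  have hn : (0 : ℝ) < n := mod_cast hm.trans hmn
  rw [shiftRatio, if_pos hj, div_le_iff₀ (permProb_pos _ _)]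
  have hle := permProb_le_permRatio_pow_mul hm (n - j) j
  rw [Nat.sub_add_cancel hj] at hle
  refine hle.trans (mul_le_mul_of_nonneg_right ?_ (permProb_pos _ _).le)
  rw [permRatio_pow_eq hm, saddlePoint_pow_eq, ← exp_add, exp_le_exp]
  calc (j / m : ℝ) * (m * log (permRatio (n - 1) m)) ≤ j / m * (xi (n / m) + 2 * (m / n)) := by
        gcongr; exact mul_log_permRatio_le hm hmn
    _ = j / m * xi (n / m) + 2 * (j / n) := by
        have : (m : ℝ) ≠ 0 := mod_cast hm.ne'
        field_simp

lemma le_shiftRatio (hm : 0 < m) (hmn : m < n) (hj : m ≤ n - j) :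
    saddlePoint n m ^ j * (1 - 2 * (j / m) * (xi (n / m) / m + j / (n - j : ℕ))) ≤
      shiftRatio n m j := by
  have hjn : j ≤ n := by omega
  rw [shiftRatio, if_pos hjn, le_div_iff₀ (permProb_pos _ _)]
  have hle := permRatio_pow_mul_le hm (n - j) j
  rw [Nat.sub_add_cancel hjn] at hle
  refine (mul_le_mul_of_nonneg_right ?_ (permProb_pos _ _).le).trans hle
  rw [permRatio_pow_eq hm, saddlePoint_pow_eq]
  set x := 2 * (j / m) * (xi (n / m) / m + j / (n - j : ℕ)) with hx
  calc exp (j / m * xi (n / m)) * (1 - x) ≤ exp (j / m * xi (n / m)) * exp (-x) := by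
        gcongr; linarith [add_one_le_exp (-x)]
    _ = exp (j / m * (xi (n / m) * (1 - 2 / m) - 2 * (j / (n - j : ℕ)))) := by
        rw [← exp_add, hx]; ring_nf
    _ ≤ exp (j / m * (m * log (permRatio (n - j) m))) := by
        gcongr; exact le_mul_log_permRatio hm hj hmn

lemma exp_sub_one_le_mul_exp (x : ℝ) : exp x - 1 ≤ x * exp x := by
  have h := mul_le_mul_of_nonneg_right (add_one_le_exp (-x)) (exp_pos x).le
  rw [← exp_add, neg_add_cancel, exp_zero] at h
  linarith

lemma shiftRatio_sub_le (hm : 0 < m) (hmn : m < n) (j : ℕ) :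
    shiftRatio n m j - saddlePoint n m ^ j ≤ 15 * saddlePoint n m ^ j * (j / n) := by
  have hz : 0 < saddlePoint n m ^ j := pow_pos (saddlePoint_pos n m) j
  rcases le_or_gt j n with hj | hj
  · have hx : (j / n : ℝ) ≤ 1 := div_le_one_of_le₀ (mod_cast hj) n.cast_nonneg
    have hexp := exp_sub_one_le_mul_exp (2 * (j / n : ℝ))
    have hexp2 : exp (2 * (j / n)) ≤ 15 / 2 := by
      rw [two_mul, exp_add]
      have h1 : exp (j / n) ≤ 2.7182818286 :=
        (exp_le_exp.2 hx).trans exp_one_lt_d9.le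
      nlinarith [exp_pos (j / n : ℝ)]
    have : (0 : ℝ) ≤ j / n := by positivity
    calc shiftRatio n m j - saddlePoint n m ^ j
        ≤ saddlePoint n m ^ j * (exp (2 * (j / n)) - 1) := by
          linarith [shiftRatio_le hm hmn hj]
      _ ≤ saddlePoint n m ^ j * (2 * (j / n) * (15 / 2)) := by
          gcongr
          exact hexp.trans (by gcongr)
      _ = 15 * saddlePoint n m ^ j * (j / n) := by ring
  · rw [shiftRatio, if_neg hj.not_ge, zero_sub]
    exact (neg_nonpos.2 hz.le).trans (by positivity)

lemma saddlePoint_pow_sub_le (hm : 0 < m) (hmn : m < n) (hmj : m ≤ j)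
    (hξ : 10 * n * xi (n / m) ≤ m ^ 2) :
    saddlePoint n m ^ j - shiftRatio n m j ≤ 15 * saddlePoint n m ^ j * (j / n) * (j / m) := by
  have hm' : (0 : ℝ) < m := mod_cast hm
  have hn : (0 : ℝ) < n := mod_cast hm.trans hmn
  have hz : 0 < saddlePoint n m ^ j := pow_pos (saddlePoint_pos n m) j
  have hjm : (1 : ℝ) ≤ j / m := (one_le_div hm').2 (mod_cast hmj)
  rcases le_or_gt (2 * j) n with hj | hj
  · have hξm : xi (n / m) / m ≤ j / n / 10 := by
      have hmj' : (m : ℝ) ≤ j := mod_cast hmj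
      rw [div_div, div_le_div_iff₀ hm' (by positivity)]
      nlinarith
    have hjn : (j / (n - j : ℕ) : ℝ) ≤ 2 * (j / n) := by
      rw [← mul_div_assoc, div_le_div_iff₀ (mod_cast (by omega)) hn]
      exact_mod_cast (by nlinarith [show n ≤ 2 * (n - j) by omega] : j * n ≤ 2 * j * (n - j))
    calc saddlePoint n m ^ j - shiftRatio n m j
        ≤ saddlePoint n m ^ j * (2 * (j / m) * (xi (n / m) / m + j / (n - j : ℕ))) := by
          linarith [le_shiftRatio hm hmn (by omega : m ≤ n - j)]
      _ ≤ saddlePoint n m ^ j * (2 * (j / m) * (j / n / 10 + 2 * (j / n))) := by gcongr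
      _ = 4.2 * saddlePoint n m ^ j * (j / n) * (j / m) := by ring
      _ ≤ 15 * saddlePoint n m ^ j * (j / n) * (j / m) := by gcongr; norm_num
  · have hjn : (1 : ℝ) ≤ 2 * (j / n) := by
      rw [← mul_div_assoc, one_le_div hn]
      exact_mod_cast hj.le
    calc saddlePoint n m ^ j - shiftRatio n m j ≤ saddlePoint n m ^ j * 1 * 1 := by
          linarith [shiftRatio_nonneg n m j]
      _ ≤ saddlePoint n m ^ j * (2 * (j / n)) * (j / m) := by gcongr
      _ = 2 * saddlePoint n m ^ j * (j / n) * (j / m) := by ring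
      _ ≤ 15 * saddlePoint n m ^ j * (j / n) * (j / m) := by gcongr; norm_num

lemma abs_shiftRatio_sub_le (hm : 0 < m) (hmn : m < n) (hξ : 10 * n * xi (n / m) ≤ m ^ 2)
    (hz : saddlePoint n m * exp (2 / m) ≤ 5 / 4) (k : ℕ) :
    |shiftRatio n m (m + k) - saddlePoint n m ^ (m + k)| ≤
      15 * (exp (xi (n / m)) / (n / m)) * (5 / 4) ^ k := by
  have hm' : (0 : ℝ) < m := mod_cast hm
  have hn : (0 : ℝ) < n := mod_cast hm.trans hmn
  have hz0 : 0 < saddlePoint n m := saddlePoint_pos n m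
  have hjm : (1 : ℝ) ≤ (m + k : ℕ) / m := (one_le_div hm').2 (mod_cast m.le_add_right k)
  have hjexp : ((m + k : ℕ) / m : ℝ) ≤ exp (1 / m) ^ k := by
    rw [← exp_nat_mul, Nat.cast_add, add_div, div_self hm'.ne', mul_one_div, add_comm]
    exact add_one_le_exp _
  have habs : |shiftRatio n m (m + k) - saddlePoint n m ^ (m + k)| ≤
      15 * saddlePoint n m ^ (m + k) * ((m + k : ℕ) / n) * ((m + k : ℕ) / m) := by
    refine abs_sub_le_iff.2 ⟨?_, saddlePoint_pow_sub_le hm hmn (m.le_add_right k) hξ⟩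
    exact (shiftRatio_sub_le hm hmn (m + k)).trans
      (le_mul_of_one_le_right (by positivity) hjm)
  calc |shiftRatio n m (m + k) - saddlePoint n m ^ (m + k)|
      ≤ 15 * saddlePoint n m ^ (m + k) * ((m + k : ℕ) / n) * ((m + k : ℕ) / m) := habs
    _ = 15 * (exp (xi (n / m)) / (n / m)) * saddlePoint n m ^ k * ((m + k : ℕ) / m) ^ 2 := by
        rw [pow_add, saddlePoint_pow_self hm]
        field_simp
    _ ≤ 15 * (exp (xi (n / m)) / (n / m)) * saddlePoint n m ^ k * (exp (1 / m) ^ k) ^ 2 := by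
        gcongr
    _ = 15 * (exp (xi (n / m)) / (n / m)) * (saddlePoint n m * exp (2 / m)) ^ k := by
        rw [← pow_mul, mul_comm k 2, pow_mul, ← exp_nat_mul, mul_pow]
        ring_nf
    _ ≤ 15 * (exp (xi (n / m)) / (n / m)) * (5 / 4) ^ k := by gcongr

lemma xi_le_log (hm : 0 < m) (hmn : m < n) (hsize : 10 * n * log n ≤ m ^ 2) :
    xi (n / m) ≤ log n := by
  have hlog : 0 < log n := log_pos (mod_cast (Nat.succ_le_of_lt hm).trans_lt hmn)
  refine xi_le_of_le_expSlope (one_lt_cast_div_cast hm hmn) hlog ?_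
  rw [expSlope, exp_log (mod_cast hm.trans hmn), div_le_div_iff₀ (mod_cast hm) hlog]
  have hmn' : (m : ℝ) + 1 ≤ n := mod_cast hmn
  have : (m : ℝ) ^ 2 ≤ (n - 1) * m := by nlinarith
  nlinarith

lemma twenty_le_of_size (hm : 0 < m) (hmn : m < n) (hsize : 10 * n * log n ≤ m ^ 2) :
    (20 : ℝ) ≤ m := by
  have hm' : (0 : ℝ) < m := mod_cast hm
  have hlog : 10 * log n ≤ m := by
    have hmn' : (m : ℝ) ≤ n := mod_cast hmn.le
    have : 0 ≤ log n := log_natCast_nonneg n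
    nlinarith
  have hlog2 := log_two_gt_d9
  have hn2 : log 2 ≤ log n := log_le_log two_pos (mod_cast (by omega))
  have hm6 : 6 < m := by
    have : (6 : ℝ) < m := by linarith
    exact_mod_cast this
  have hn8 : log (2 ^ 3) ≤ log n := by
    refine log_le_log (by norm_num) ?_
    norm_num
    exact_mod_cast (by omega : 8 ≤ n)
  rw [log_pow] at hn8
  push_cast at hn8
  linarith

lemma saddlePoint_mul_exp_le (hm : (20 : ℝ) ≤ m) (hmn : m ≤ n)
    (hξ : 10 * n * xi (n / m) ≤ m ^ 2) : saddlePoint n m * exp (2 / m) ≤ 5 / 4 := by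
  have hm' : (0 : ℝ) < m := by linarith
  have hmn' : (m : ℝ) ≤ n := mod_cast hmn
  have hξm : xi (n / m) / m ≤ 1 / 10 := by
    rw [div_le_div_iff₀ hm' (by norm_num)]
    nlinarith
  have h2m : 2 / (m : ℝ) ≤ 1 / 10 := by
    rw [div_le_div_iff₀ hm' (by norm_num)]
    linarith
  rw [saddlePoint, ← exp_add]
  calc exp (xi (n / m) / m + 2 / m) ≤ exp (1 / 5) := by gcongr; linarith
    _ ≤ 1 / (1 - 1 / 5) := exp_bound_div_one_sub_of_interval (by norm_num) (by norm_num)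
    _ = 5 / 4 := by norm_num

end SaddlePoint

/-! ### The generating function of friable polynomials -/

section EulerFactor

open PowerSeries

lemma mk_pow_eq {R : Type*} [CommRing R] (c : R) :
    (PowerSeries.mk (c ^ ·) : R⟦X⟧) = 1 + C c * X * PowerSeries.mk (c ^ ·) := by
  ext n
  cases n with
  | zero => simp
  | succ n => simp [mul_assoc, coeff_succ_X_mul, coeff_one, pow_succ']

lemma hasLogDeriv_mk_pow {R : Type*} [CommRing R] (c : R) :
    HasLogDeriv (PowerSeries.mk (c ^ ·)) (PowerSeries.mk (c ^ ·) - 1) := by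
  set A : R⟦X⟧ := PowerSeries.mk (c ^ ·)
  have hA : A = 1 + C c * X * A := mk_pow_eq c
  have hderiv : d⁄dX R A = C c * (A + X * d⁄dX R A) := by
    conv_lhs => rw [hA]
    simp only [map_add, derivative_one, Derivation.leibniz, derivative_C, derivative_X, smul_eq_mul]
    ring
  rw [HasLogDeriv]
  linear_combination (X * A) * hderiv - (X * d⁄dX R A + A) * hA

/-- The expansion of `(1 - (t X)ᵈ)⁻¹`, the contribution of one irreducible polynomial of degree `d`
to the generating function of friable polynomials over a field with `t⁻¹` elements. -/
noncomputable def eulerFactor (t : ℝ) (d : ℕ) : ℝ⟦X⟧ :=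
  PowerSeries.mk fun n => if d ∣ n then t ^ n else 0

variable {t : ℝ} {d : ℕ}

lemma eulerFactor_eq_expand (hd : d ≠ 0) :
    eulerFactor t d = expand d hd (PowerSeries.mk ((t ^ d) ^ ·)) := by
  ext n
  rw [coeff_expand, eulerFactor, coeff_mk]
  split_ifs with h
  · rw [coeff_mk, ← pow_mul, Nat.mul_div_cancel' h]
  · rfl

lemma eulerFactor_eq (hd : d ≠ 0) :
    eulerFactor t d = 1 + C (t ^ d) * X ^ d * eulerFactor t d := by
  rw [eulerFactor_eq_expand hd]
  conv_lhs => rw [mk_pow_eq]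
  rw [map_add, map_one, map_mul, map_mul, expand_C, expand_X]

lemma hasLogDeriv_eulerFactor (hd : d ≠ 0) :
    HasLogDeriv (eulerFactor t d) (d • (eulerFactor t d - 1)) := by
  have h := (hasLogDeriv_mk_pow (t ^ d)).expand hd
  rwa [map_sub, map_one, ← eulerFactor_eq_expand hd] at h

lemma evalsTo_eulerFactor {y : ℝ} (hd : d ≠ 0) (hyt : |y * t| < 1) :
    EvalsTo (eulerFactor t d) y (1 - (y * t) ^ d)⁻¹ := by
  rw [eulerFactor_eq_expand hd]
  refine EvalsTo.expand hd ((hasSum_geometric_of_abs_lt_one ?_).congr_fun fun n => ?_)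
  · rw [abs_pow]
    exact pow_lt_one₀ (abs_nonneg _) hyt hd
  · rw [coeff_mk, ← mul_pow, ← mul_pow, mul_comm]

end EulerFactor

section MonicPolynomials

open Polynomial

variable {F : Type*} [Field F]

/-- The monic polynomials of degree `n` all of whose monic irreducible factors lie in `S`. -/
def monicWithFactorsIn (S : Set F[X]) (n : ℕ) : Set F[X] :=
  {f | f.Monic ∧ f.natDegree = n ∧ ∀ p : F[X], p.Monic → Irreducible p → p ∣ f → p ∈ S}

lemma monicWithFactorsIn_empty_zero : monicWithFactorsIn (∅ : Set F[X]) 0 = {1} := by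
  ext f
  refine ⟨fun hf => hf.1.natDegree_eq_zero.1 hf.2.1, ?_⟩
  rintro rfl
  exact ⟨monic_one, natDegree_one, fun p _ hp h => absurd (isUnit_of_dvd_one h) hp.not_isUnit⟩

lemma monicWithFactorsIn_empty_of_pos {n : ℕ} (hn : 0 < n) :
    monicWithFactorsIn (∅ : Set F[X]) n = ∅ := by
  refine Set.eq_empty_iff_forall_notMem.2 fun f hf => ?_
  obtain ⟨p, hp, hirr, hdvd⟩ := exists_monic_irreducible_factor f
    (not_isUnit_of_natDegree_pos f (hf.2.1 ▸ hn))
  exact hf.2.2 p hp hirr hdvd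

variable {S : Set F[X]} {P f : F[X]} {n : ℕ}

lemma mem_monicWithFactorsIn_insert_iff_of_not_dvd (hPf : ¬ P ∣ f) :
    f ∈ monicWithFactorsIn (insert P S) n ↔ f ∈ monicWithFactorsIn S n := by
  refine and_congr_right fun _ => and_congr_right fun _ => forall₄_congr fun p _ _ hp => ?_
  have hne : p ≠ P := fun h => hPf (h ▸ hp)
  simp [hne]

lemma mul_mem_monicWithFactorsIn_iff (hP : P.Monic) (hirr : Irreducible P) (hPS : P ∈ S)
    (hn : P.natDegree ≤ n) :
    P * f ∈ monicWithFactorsIn S n ↔ f ∈ monicWithFactorsIn S (n - P.natDegree) := by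
  constructor
  · rintro ⟨hmonic, hdeg, hfac⟩
    have hf : f.Monic := hP.of_mul_monic_left hmonic
    rw [hP.natDegree_mul hf] at hdeg
    exact ⟨hf, by omega, fun p hp hpirr hpf => hfac p hp hpirr (hpf.mul_left P)⟩
  · rintro ⟨hf, hdeg, hfac⟩
    refine ⟨hP.mul hf, by rw [hP.natDegree_mul hf]; omega, fun p hp hpirr hpf => ?_⟩
    rcases hpirr.prime.dvd_or_dvd hpf with h | h
    · rwa [eq_of_monic_of_associated hp hP (hpirr.associated_of_dvd hirr h)]
    · exact hfac p hp hpirr h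

lemma monicWithFactorsIn_insert_of_lt (hn : n < P.natDegree) :
    monicWithFactorsIn (insert P S) n = monicWithFactorsIn S n := by
  ext f
  have hiff (hf : f.Monic) (hdeg : f.natDegree = n) :=
    mem_monicWithFactorsIn_insert_iff_of_not_dvd (S := S) (n := n)
      (not_dvd_of_natDegree_lt hf.ne_zero (hdeg.trans_lt hn))
  exact ⟨fun h => (hiff h.1 h.2.1).1 h, fun h => (hiff h.1 h.2.1).2 h⟩

lemma monicWithFactorsIn_insert_of_le (hP : P.Monic) (hirr : Irreducible P) (hPS : P ∉ S)
    (hn : P.natDegree ≤ n) : monicWithFactorsIn (insert P S) n =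
      monicWithFactorsIn S n ∪ (P * ·) '' monicWithFactorsIn (insert P S) (n - P.natDegree) := by
  ext f
  by_cases hPf : P ∣ f
  · obtain ⟨g, rfl⟩ := hPf
    have hnot : P * g ∉ monicWithFactorsIn S n := fun h =>
      hPS (h.2.2 P hP hirr (dvd_mul_right P g))
    rw [Set.mem_union, or_iff_right hnot, (mul_right_injective₀ hirr.ne_zero).mem_set_image,
      mul_mem_monicWithFactorsIn_iff hP hirr (S.mem_insert P) hn]
  · have hnot : f ∉ (P * ·) '' monicWithFactorsIn (insert P S) (n - P.natDegree) := by
      rintro ⟨g, -, rfl⟩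
      exact hPf (dvd_mul_right P g)
    rw [mem_monicWithFactorsIn_insert_iff_of_not_dvd hPf, Set.mem_union, or_iff_left hnot]

lemma finite_monic_natDegree_eq [Finite F] (n : ℕ) :
    {f : F[X] | f.Monic ∧ f.natDegree = n}.Finite :=
  .of_equiv (Fin n → F) ((monicEquivDegreeLT n).trans (degreeLTEquiv F n).toEquiv).symm

lemma finite_monicWithFactorsIn [Finite F] (S : Set F[X]) (n : ℕ) :
    (monicWithFactorsIn S n).Finite :=
  (finite_monic_natDegree_eq n).subset fun _ hf => ⟨hf.1, hf.2.1⟩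

lemma ncard_monicWithFactorsIn_insert [Finite F] (hP : P.Monic) (hirr : Irreducible P)
    (hPS : P ∉ S) (hn : P.natDegree ≤ n) :
    (monicWithFactorsIn (insert P S) n).ncard = (monicWithFactorsIn S n).ncard +
      (monicWithFactorsIn (insert P S) (n - P.natDegree)).ncard := by
  have hdisj : Disjoint (monicWithFactorsIn S n)
      ((P * ·) '' monicWithFactorsIn (insert P S) (n - P.natDegree)) := by
    rw [Set.disjoint_left]
    rintro _ hf ⟨g, -, rfl⟩
    exact hPS (hf.2.2 P hP hirr (dvd_mul_right P g))
  rw [monicWithFactorsIn_insert_of_le hP hirr hPS hn,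
    Set.ncard_union_eq hdisj (finite_monicWithFactorsIn _ _)
      ((finite_monicWithFactorsIn _ _).image _),
    Set.ncard_image_of_injective _ (mul_right_injective₀ hirr.ne_zero)]

variable [Fintype F]

lemma ncard_monic_natDegree_eq (n : ℕ) :
    {f : F[X] | f.Monic ∧ f.natDegree = n}.ncard = Fintype.card F ^ n := by
  have e : {f : F[X] | f.Monic ∧ f.natDegree = n} ≃ (Fin n → F) :=
    (monicEquivDegreeLT n).trans (degreeLTEquiv F n).toEquiv
  rw [← Nat.card_coe_set_eq, Nat.card_congr e]
  simp

/-- The generating function of the proportions, among the monic polynomials of each degree, of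
those all of whose monic irreducible factors lie in `S`. -/
noncomputable def factorSeries (S : Set F[X]) : PowerSeries ℝ :=
  PowerSeries.mk fun n => (monicWithFactorsIn S n).ncard * ((Fintype.card F : ℝ)⁻¹) ^ n

lemma factorSeries_empty : factorSeries (∅ : Set F[X]) = 1 := by
  ext n
  rw [factorSeries, PowerSeries.coeff_mk, PowerSeries.coeff_one]
  rcases n.eq_zero_or_pos with rfl | hn
  · simp [monicWithFactorsIn_empty_zero]
  · simp [monicWithFactorsIn_empty_of_pos hn, hn.ne']

lemma factorSeries_insert_eq_add (hP : P.Monic) (hirr : Irreducible P) (hPS : P ∉ S) :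
    factorSeries (insert P S) = factorSeries S +
      PowerSeries.C ((Fintype.card F : ℝ)⁻¹ ^ P.natDegree) * PowerSeries.X ^ P.natDegree *
        factorSeries (insert P S) := by
  ext n
  rw [map_add, mul_assoc, PowerSeries.coeff_C_mul, PowerSeries.coeff_X_pow_mul']
  simp only [factorSeries, PowerSeries.coeff_mk]
  split_ifs with hn
  · rw [ncard_monicWithFactorsIn_insert hP hirr hPS hn, ← Nat.sub_add_cancel hn, pow_add,
      Nat.add_sub_cancel]
    push_cast
    ring
  · rw [monicWithFactorsIn_insert_of_lt (not_le.1 hn), mul_zero, add_zero]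

lemma factorSeries_insert (hP : P.Monic) (hirr : Irreducible P) (hPS : P ∉ S) :
    factorSeries (insert P S) =
      eulerFactor (Fintype.card F : ℝ)⁻¹ P.natDegree * factorSeries S := by
  have hE := eulerFactor_eq (t := (Fintype.card F : ℝ)⁻¹) hirr.natDegree_pos.ne'
  linear_combination eulerFactor (Fintype.card F : ℝ)⁻¹ P.natDegree *
    factorSeries_insert_eq_add hP hirr hPS - factorSeries (insert P S) * hE

lemma factorSeries_eq_prod (T : Finset F[X]) (hT : ∀ P ∈ T, P.Monic ∧ Irreducible P) :
    factorSeries (T : Set F[X]) = ∏ P ∈ T, eulerFactor (Fintype.card F : ℝ)⁻¹ P.natDegree := by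
  classical
  induction T using Finset.induction_on with
  | empty => rw [Finset.coe_empty, factorSeries_empty, Finset.prod_empty]
  | insert P T hPT ih =>
    obtain ⟨hP, hirr⟩ := hT P (T.mem_insert_self P)
    rw [Finset.coe_insert, Finset.prod_insert hPT, factorSeries_insert hP hirr (by simpa using hPT),
      ih fun Q hQ => hT Q (Finset.mem_insert_of_mem hQ)]

end MonicPolynomials

section FriablePolynomials

open Polynomial

section

variable (F : Type*) [Field F] [Finite F] (m : ℕ)

lemma finite_monic_irreducible_natDegree_le :
    {P : F[X] | P.Monic ∧ Irreducible P ∧ P.natDegree ≤ m}.Finite :=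
  ((Set.finite_Iic m).biUnion fun d _ => finite_monic_natDegree_eq d).subset fun _ hP =>
    Set.mem_biUnion hP.2.2 ⟨hP.1, rfl⟩

/-- The monic irreducible polynomials of degree at most `m`. -/
noncomputable def irreducibles : Finset F[X] := (finite_monic_irreducible_natDegree_le F m).toFinset

variable {F m}

lemma mem_irreducibles {P : F[X]} :
    P ∈ irreducibles F m ↔ P.Monic ∧ Irreducible P ∧ P.natDegree ≤ m := by
  simp [irreducibles]

end

section

variable (F : Type*) [Field F] [Fintype F] (m : ℕ)

/-- The generating function `∏ (1 - (X/q)^deg P)⁻¹` of the proportions of `m`-friable monic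
polynomials over a field with `q` elements. -/
noncomputable def friableSeries : PowerSeries ℝ :=
  ∏ P ∈ irreducibles F m, eulerFactor (Fintype.card F : ℝ)⁻¹ P.natDegree

/-- The logarithmic derivative of `friableSeries F m`. -/
noncomputable def friableLogDeriv : PowerSeries ℝ :=
  ∑ P ∈ irreducibles F m, P.natDegree • (eulerFactor (Fintype.card F : ℝ)⁻¹ P.natDegree - 1)

end

section

variable {F : Type*} [Field F] [Fintype F] {m i n : ℕ}

lemma coeff_friableSeries : PowerSeries.coeff n (friableSeries F m) =
    (monicWithFactorsIn (irreducibles F m : Set F[X]) n).ncard * ((Fintype.card F : ℝ)⁻¹) ^ n := by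
  rw [friableSeries, ← factorSeries_eq_prod, factorSeries, PowerSeries.coeff_mk]
  intro P hP
  rw [mem_irreducibles] at hP
  exact ⟨hP.1, hP.2.1⟩

lemma coeff_friableSeries_of_le (hn : n ≤ m) : PowerSeries.coeff n (friableSeries F m) = 1 := by
  have hset : monicWithFactorsIn (irreducibles F m : Set F[X]) n =
      {f | f.Monic ∧ f.natDegree = n} := by
    ext f
    refine ⟨fun hf => ⟨hf.1, hf.2.1⟩, fun hf => ⟨hf.1, hf.2, fun P hP hirr hPf => ?_⟩⟩
    have hdeg := natDegree_le_of_dvd hPf hf.1.ne_zero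
    exact mem_irreducibles.2 ⟨hP, hirr, hdeg.trans (hf.2.trans_le hn)⟩
  rw [coeff_friableSeries, hset, ncard_monic_natDegree_eq, Nat.cast_pow, ← mul_pow,
    mul_inv_cancel₀ (mod_cast Fintype.card_ne_zero), one_pow]

lemma hasLogDeriv_friableSeries : HasLogDeriv (friableSeries F m) (friableLogDeriv F m) :=
  .prod fun _ hP => hasLogDeriv_eulerFactor (mem_irreducibles.1 hP).2.1.natDegree_pos.ne'

lemma coeff_friableLogDeriv (hi : 0 < i) : PowerSeries.coeff i (friableLogDeriv F m) =
    (∑ P ∈ irreducibles F m with P.natDegree ∣ i, (P.natDegree : ℝ)) *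
      ((Fintype.card F : ℝ)⁻¹) ^ i := by
  rw [friableLogDeriv, map_sum, Finset.sum_filter, Finset.sum_mul]
  refine Finset.sum_congr rfl fun P _ => ?_
  rw [map_nsmul, map_sub, PowerSeries.coeff_one, if_neg hi.ne', sub_zero, eulerFactor,
    PowerSeries.coeff_mk, nsmul_eq_mul, mul_ite, mul_zero, ite_mul, zero_mul]

lemma coeff_zero_friableLogDeriv : PowerSeries.coeff 0 (friableLogDeriv F m) = 0 := by
  simp [friableLogDeriv, eulerFactor]

lemma coeff_friableLogDeriv_of_le (hi : 0 < i) (him : i ≤ m) :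
    PowerSeries.coeff i (friableLogDeriv F m) = 1 := by
  have hpartial (n : ℕ) (hn : n ≤ m) :
      ∑ k ∈ Finset.range (n + 1), PowerSeries.coeff k (friableLogDeriv F m) = n := by
    have h := (hasLogDeriv_friableSeries (F := F) (m := m)).coeff_eq n
    rw [coeff_friableSeries_of_le hn, mul_one,
      Finset.Nat.sum_antidiagonal_eq_sum_range_succ_mk] at h
    rw [h]
    refine Finset.sum_congr rfl fun k _ => ?_
    rw [coeff_friableSeries_of_le (by omega), mul_one]
  have hi1 : i - 1 + 1 = i := Nat.sub_add_cancel hi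
  have hlt := hpartial (i - 1) (by omega)
  have hle := hpartial i him
  rw [hi1, Nat.cast_pred hi] at hlt
  rw [Finset.sum_range_succ, hlt] at hle
  linarith

lemma sum_natDegree_eq_le {d : ℕ} (hd : 0 < d) :
    ∑ P ∈ irreducibles F m with P.natDegree = d, (P.natDegree : ℝ) ≤ (Fintype.card F : ℝ) ^ d := by
  have hq : (0 : ℝ) < Fintype.card F ^ d := by have := Fintype.card_pos (α := F); positivity
  have hsum := coeff_friableLogDeriv_of_le (F := F) hd le_rfl
  rw [coeff_friableLogDeriv hd, inv_pow, ← div_eq_mul_inv, div_eq_one_iff_eq hq.ne'] at hsum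
  rw [← hsum]
  refine Finset.sum_le_sum_of_subset_of_nonneg (fun P hP => ?_) fun _ _ _ => Nat.cast_nonneg _
  rw [Finset.mem_filter, mem_irreducibles] at hP ⊢
  exact ⟨⟨hP.1.1, hP.1.2.1, hP.2.le⟩, hP.2 ▸ dvd_rfl⟩

/-- A proper divisor of `i` is at most `i / 2`. -/
lemma sum_natDegree_dvd_le (hi : m < i) :
    ∑ P ∈ irreducibles F m with P.natDegree ∣ i, (P.natDegree : ℝ) ≤
      ∑ d ∈ Finset.Icc 1 (i / 2), (Fintype.card F : ℝ) ^ d := by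
  rw [← Finset.sum_fiberwise_of_maps_to (t := Finset.Icc 1 (i / 2)) (g := natDegree)]
  · refine Finset.sum_le_sum fun d hd => le_trans ?_ (sum_natDegree_eq_le (m := m)
      (Finset.mem_Icc.1 hd).1)
    refine Finset.sum_le_sum_of_subset_of_nonneg ?_ fun _ _ _ => Nat.cast_nonneg _
    exact Finset.filter_subset_filter _ (Finset.filter_subset _ _)
  · intro P hP
    rw [Finset.mem_filter, mem_irreducibles] at hP
    obtain ⟨⟨-, hirr, hPm⟩, k, hk⟩ := hP
    have hk2 : 2 ≤ k := by
      by_contra! hlt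
      interval_cases k <;> omega
    rw [Finset.mem_Icc, Nat.le_div_iff_mul_le two_pos, hk]
    exact ⟨hirr.natDegree_pos, Nat.mul_le_mul_left _ hk2⟩

lemma sum_Icc_pow_le {q : ℝ} (hq : 2 ≤ q) (N : ℕ) : ∑ d ∈ Finset.Icc 1 N, q ^ d ≤ 2 * q ^ N := by
  induction N with
  | zero => simp
  | succ N ih =>
    rw [Finset.sum_Icc_succ_top (by omega), pow_succ]
    nlinarith [pow_nonneg (two_pos.le.trans hq) N]

lemma two_le_card : (2 : ℝ) ≤ Fintype.card F := mod_cast Fintype.one_lt_card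

lemma coeff_friableLogDeriv_le (hi : m < i) : PowerSeries.coeff i (friableLogDeriv F m) ≤
    2 * ((Fintype.card F : ℝ)⁻¹) ^ ((i + 1) / 2) := by
  have hq : (Fintype.card F : ℝ) ≠ 0 := mod_cast Fintype.card_ne_zero
  have hpow : (Fintype.card F : ℝ) ^ (i / 2) * ((Fintype.card F : ℝ)⁻¹) ^ i =
      ((Fintype.card F : ℝ)⁻¹) ^ ((i + 1) / 2) := by
    have hhalf : i / 2 + (i + 1) / 2 = i := by omega
    rw [← one_mul (_ ^ ((i + 1) / 2)), ← one_pow (i / 2), ← mul_inv_cancel₀ hq, mul_pow, mul_assoc,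
      ← pow_add, hhalf]
  have hsum := (sum_natDegree_dvd_le (F := F) hi).trans (sum_Icc_pow_le two_le_card _)
  calc PowerSeries.coeff i (friableLogDeriv F m)
      ≤ 2 * (Fintype.card F : ℝ) ^ (i / 2) * ((Fintype.card F : ℝ)⁻¹) ^ i := by
        rw [coeff_friableLogDeriv (by omega)]
        gcongr
    _ = 2 * ((Fintype.card F : ℝ)⁻¹) ^ ((i + 1) / 2) := by
        rw [mul_assoc, hpow]

lemma coeff_friableLogDeriv_nonneg (i : ℕ) :
    0 ≤ PowerSeries.coeff i (friableLogDeriv F m) := by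
  rcases i.eq_zero_or_pos with rfl | hi
  · rw [coeff_zero_friableLogDeriv]
  · rw [coeff_friableLogDeriv hi]
    positivity

end

section

variable {F : Type} [Field F] [Fintype F] {m : ℕ}

lemma polyProb_eq_coeff (n : ℕ) : polyProb F n m = PowerSeries.coeff n (friableSeries F m) := by
  have hset : monicWithFactorsIn (irreducibles F m : Set F[X]) n =
      {f | f.Monic ∧ f.natDegree = n ∧ ∀ p : F[X], p.Monic → Irreducible p → p ∣ f →
        p.natDegree ≤ m} := by
    ext f
    simp +contextual [monicWithFactorsIn, mem_irreducibles]
  rw [polyProb, coeff_friableSeries, hset, inv_pow, div_eq_mul_inv]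
  rfl

lemma evalsTo_friableSeries {y : ℝ} (hy : |y| < Fintype.card F) :
    EvalsTo (friableSeries F m) y (FqFun F m y) := by
  have hFq : FqFun F m y =
      ∏ P ∈ irreducibles F m, (1 - (y * (Fintype.card F : ℝ)⁻¹) ^ P.natDegree)⁻¹ :=
    finprod_mem_eq_finite_toFinset_prod _ _
  rw [hFq]
  refine .prod fun P hP => evalsTo_eulerFactor (mem_irreducibles.1 hP).2.1.natDegree_pos.ne' ?_
  have hq : (0 : ℝ) < Fintype.card F := two_pos.trans_le two_le_card
  rwa [abs_mul, abs_inv, Nat.abs_cast, ← div_eq_mul_inv, div_lt_one hq]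

end

end FriablePolynomials

/-! ### Comparison of friable polynomials with friable permutations -/

section Comparison

open PowerSeries

section

variable (F : Type*) [Field F] [Fintype F] (m : ℕ)

/-- The quotient of the generating functions of `m`-friable polynomials and of `m`-friable
permutations; its sum at `y` is `Gq F m y`. -/
noncomputable def quotientSeries : ℝ⟦X⟧ := friableSeries F m * expPartial m (-1)

/-- The logarithmic derivative of `quotientSeries F m`. -/
noncomputable def quotientLogDeriv : ℝ⟦X⟧ :=
  friableLogDeriv F m + ∑ i ∈ Finset.range m, (-1 : ℝ) • X ^ (i + 1)

end

section

variable {F : Type*} [Field F] [Fintype F] {m : ℕ}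

lemma hasLogDeriv_quotientSeries : HasLogDeriv (quotientSeries F m) (quotientLogDeriv F m) :=
  hasLogDeriv_friableSeries.mul (hasLogDeriv_expPartial m (-1))

lemma quotientSeries_mul_expPartial : quotientSeries F m * expPartial m 1 = friableSeries F m := by
  rw [quotientSeries, mul_assoc, mul_comm (expPartial m (-1)), expPartial_mul_expPartial_neg,
    mul_one]

lemma sum_range_succ_eq_sum_Icc {M : Type*} [AddCommMonoid M] (f : ℕ → M) (n : ℕ) :
    ∑ i ∈ Finset.range n, f (i + 1) = ∑ i ∈ Finset.Icc 1 n, f i := by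
  rw [Finset.range_eq_Ico, Finset.sum_Ico_add' f 0 n 1, zero_add, Finset.Ico_add_one_right_eq_Icc]

lemma coeff_quotientLogDeriv (i : ℕ) : coeff i (quotientLogDeriv F m) =
    coeff i (friableLogDeriv F m) - if i ∈ Finset.Icc 1 m then 1 else 0 := by
  have hsum : coeff i (∑ k ∈ Finset.range m, (-1 : ℝ) • X ^ (k + 1) : ℝ⟦X⟧) =
      ∑ k ∈ Finset.Icc 1 m, if i = k then -1 else 0 := by
    rw [← sum_range_succ_eq_sum_Icc, map_sum]
    simp only [map_smul, coeff_X_pow, smul_eq_mul, mul_ite, mul_one, mul_zero]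
  rw [quotientLogDeriv, map_add, hsum, Finset.sum_ite_eq]
  split_ifs <;> ring

lemma coeff_quotientLogDeriv_of_le {i : ℕ} (hi : i ≤ m) :
    coeff i (quotientLogDeriv F m) = 0 := by
  rw [coeff_quotientLogDeriv]
  rcases i.eq_zero_or_pos with rfl | hpos
  · simp [coeff_zero_friableLogDeriv]
  · rw [if_pos (Finset.mem_Icc.2 ⟨hpos, hi⟩), coeff_friableLogDeriv_of_le hpos hi, sub_self]

lemma coeff_quotientLogDeriv_of_lt {i : ℕ} (hi : m < i) :
    coeff i (quotientLogDeriv F m) = coeff i (friableLogDeriv F m) := by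
  rw [coeff_quotientLogDeriv, if_neg (by simp [hi]), sub_zero]

lemma coeff_quotientLogDeriv_nonneg (i : ℕ) : 0 ≤ coeff i (quotientLogDeriv F m) := by
  rcases le_or_gt i m with hi | hi
  · rw [coeff_quotientLogDeriv_of_le hi]
  · rw [coeff_quotientLogDeriv_of_lt hi]
    exact coeff_friableLogDeriv_nonneg i

lemma inv_card_pow_half_le (k : ℕ) :
    ((Fintype.card F : ℝ)⁻¹) ^ (k / 2) ≤ 7 / 5 * (5 / 7) ^ k :=
  calc ((Fintype.card F : ℝ)⁻¹) ^ (k / 2) ≤ ((5 / 7) ^ 2) ^ (k / 2) := by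
        gcongr
        refine (inv_anti₀ two_pos two_le_card).trans (by norm_num)
    _ = 7 / 5 * (5 / 7) ^ (2 * (k / 2) + 1) := by rw [← pow_mul, pow_succ]; ring
    _ ≤ 7 / 5 * (5 / 7) ^ k := by
        gcongr 7 / 5 * ?_
        exact pow_le_pow_of_le_one (by norm_num) (by norm_num) (by omega)

lemma coeff_quotientLogDeriv_le (k : ℕ) : coeff (k + (m + 1)) (quotientLogDeriv F m) ≤
    14 / 5 * ((Fintype.card F : ℝ)⁻¹) ^ ((m + 2) / 2) * (5 / 7) ^ k := by
  have hq : (Fintype.card F : ℝ)⁻¹ ≤ 1 := inv_le_one_of_one_le₀ (one_le_two.trans two_le_card)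
  calc coeff (k + (m + 1)) (quotientLogDeriv F m)
      ≤ 2 * ((Fintype.card F : ℝ)⁻¹) ^ ((k + (m + 1) + 1) / 2) := by
        rw [coeff_quotientLogDeriv_of_lt (by omega)]
        exact coeff_friableLogDeriv_le (by omega)
    _ ≤ 2 * ((Fintype.card F : ℝ)⁻¹) ^ ((m + 2) / 2 + k / 2) := by
        gcongr 2 * ?_
        exact pow_le_pow_of_le_one (by positivity) hq (by omega)
    _ ≤ 2 * (((Fintype.card F : ℝ)⁻¹) ^ ((m + 2) / 2) * (7 / 5 * (5 / 7) ^ k)) := by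
        rw [pow_add]
        gcongr
        exact inv_card_pow_half_le k
    _ = _ := by ring

lemma coeff_zero_quotientSeries : coeff 0 (quotientSeries F m) = 1 := by
  have hexp : constantCoeff (expPartial m (-1)) = 1 := by
    have hfactor (c : ℝ) : constantCoeff (rescale c (PowerSeries.exp ℝ)) = 1 := by
      rw [← coeff_zero_eq_constantCoeff_apply, coeff_rescale, pow_zero, one_mul,
        coeff_zero_eq_constantCoeff_apply, constantCoeff_exp]
    simp [expPartial, constantCoeff_expand, hfactor]
  have hfriable := coeff_friableSeries_of_le (F := F) m.zero_le
  rw [coeff_zero_eq_constantCoeff_apply] at hfriable ⊢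
  rw [quotientSeries, map_mul, hfriable, hexp, mul_one]

lemma coeff_quotientSeries_nonneg (j : ℕ) : 0 ≤ coeff j (quotientSeries F m) :=
  (hasLogDeriv_quotientSeries (F := F)).coeff_nonneg (by simp [coeff_zero_quotientSeries])
    (coeff_quotientLogDeriv_of_le m.zero_le) coeff_quotientLogDeriv_nonneg j

lemma coeff_quotientSeries_of_le {j : ℕ} (hj : 0 < j) (hjm : j ≤ m) :
    coeff j (quotientSeries F m) = 0 :=
  hasLogDeriv_quotientSeries.coeff_eq_zero (fun _ => coeff_quotientLogDeriv_of_le) hj hjm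

end

section

variable {F : Type} [Field F] [Fintype F] {m n : ℕ} {y : ℝ}

lemma evalsTo_quotientSeries (hy : |y| < Fintype.card F) :
    EvalsTo (quotientSeries F m) y (Gq F m y) := by
  have hsum : -∑ i ∈ Finset.Icc 1 m, y ^ i / i =
      -1 * ∑ i ∈ Finset.range m, y ^ (i + 1) / (i + 1) := by
    rw [← sum_range_succ_eq_sum_Icc]
    simp
  rw [Gq, hsum]
  exact (evalsTo_friableSeries hy).mul (evalsTo_expPartial m (-1) y)

lemma one_le_Gq (hy : 0 ≤ y) (hyq : y < Fintype.card F) : 1 ≤ Gq F m y := by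
  rw [← abs_of_nonneg hy] at hyq
  simpa only [coeff_zero_quotientSeries] using
    (evalsTo_quotientSeries (m := m) hyq).coeff_zero_le hy coeff_quotientSeries_nonneg

lemma mul_Gq_sub_one_le (hy : 0 ≤ y) (hy75 : y < 7 / 5) : (m + 1) * (Gq F m y - 1) ≤
    14 / 5 * ((Fintype.card F : ℝ)⁻¹) ^ ((m + 2) / 2) * y ^ (m + 1) * (1 - 5 / 7 * y)⁻¹ *
      Gq F m y := by
  have hq := two_le_card (F := F)
  have hyq : |y| < Fintype.card F := by
    rw [abs_of_nonneg hy]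
    linarith
  obtain ⟨l, hl, hle⟩ := EvalsTo.exists_le_of_coeff_le
    (coeff_quotientLogDeriv_nonneg (F := F) (m := m))
    (fun _ => coeff_quotientLogDeriv_of_le) coeff_quotientLogDeriv_le hy (by norm_num) (by linarith)
  have h := (evalsTo_quotientSeries hyq).mul_sub_le_of_hasLogDeriv hl hasLogDeriv_quotientSeries hy
    coeff_quotientSeries_nonneg fun _ => coeff_quotientLogDeriv_of_le
  rw [coeff_zero_quotientSeries] at h
  refine h.trans (mul_le_mul_of_nonneg_right hle ?_)
  exact zero_le_one.trans (one_le_Gq hy (le_abs_self y |>.trans_lt hyq))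

lemma Gq_sub_one_le (hm : 20 ≤ m) :
    Gq F m (5 / 4) - 1 ≤ 66 / m * ((Fintype.card F : ℝ)⁻¹) ^ ((m + 2) / 2) * (5 / 4) ^ m := by
  have hm' : (20 : ℝ) ≤ m := mod_cast hm
  set Q := ((Fintype.card F : ℝ)⁻¹) ^ ((m + 2) / 2)
  have hQy : 0 ≤ Q * (5 / 4) ^ m := by positivity
  have hG : (m + 1) * (Gq F m (5 / 4) - 1) ≤ 98 / 3 * (Q * (5 / 4) ^ m) * Gq F m (5 / 4) := by
    convert mul_Gq_sub_one_le (F := F) (m := m) (y := 5 / 4) (by norm_num) (by norm_num) using 2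
    ring
  have hsmall : Q * (5 / 4) ^ m ≤ 3 / 10 :=
    calc Q * (5 / 4) ^ m ≤ 7 / 5 * (5 / 7) ^ (m + 2) * (5 / 4) ^ m := by
          gcongr
          exact inv_card_pow_half_le (m + 2)
      _ = 5 / 7 * (25 / 28) ^ m := by
          rw [show (25 / 28 : ℝ) = 5 / 7 * (5 / 4) by norm_num, mul_pow]
          ring
      _ ≤ 5 / 7 * (25 / 28) ^ 20 := by
          gcongr 5 / 7 * ?_
          exact pow_le_pow_of_le_one (by norm_num) (by norm_num) hm
      _ ≤ 3 / 10 := by norm_num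
  have hG1 : 1 ≤ Gq F m (5 / 4) := one_le_Gq (by norm_num) (by linarith [two_le_card (F := F)])
  have hG2 : Gq F m (5 / 4) ≤ 2 := by nlinarith
  rw [mul_assoc, div_mul_eq_mul_div, le_div_iff₀ (by linarith)]
  nlinarith

lemma abs_inv_Gq_one_sub_one_le :
    |(Gq F m 1)⁻¹ - 1| ≤ 10 / (m + 1) * ((Fintype.card F : ℝ)⁻¹) ^ ((m + 2) / 2) := by
  set Q := ((Fintype.card F : ℝ)⁻¹) ^ ((m + 2) / 2)
  have hG1 : 1 ≤ Gq F m 1 := one_le_Gq zero_le_one (by linarith [two_le_card (F := F)])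
  have hG0 : 0 < Gq F m 1 := by linarith
  have hG : (m + 1) * (Gq F m 1 - 1) ≤ 10 * Q * Gq F m 1 :=
    calc (m + 1) * (Gq F m 1 - 1) ≤ _ := mul_Gq_sub_one_le zero_le_one (by norm_num)
      _ = 49 / 5 * (Q * Gq F m 1) := by ring
      _ ≤ 10 * (Q * Gq F m 1) := by gcongr; norm_num
      _ = 10 * Q * Gq F m 1 := by ring
  have hinv : 1 - (Gq F m 1)⁻¹ = (Gq F m 1 - 1) / Gq F m 1 := by field_simp
  rw [abs_sub_comm, abs_of_nonneg (sub_nonneg.2 (inv_le_one_of_one_le₀ hG1)), hinv,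
    div_le_iff₀ hG0, div_mul_eq_mul_div, div_mul_eq_mul_div, le_div_iff₀ (by positivity)]
  linarith

lemma hasSum_quotientSeries_mul_shiftRatio (hm : 0 < m) (n : ℕ) :
    HasSum (fun j => coeff j (quotientSeries F m) * shiftRatio n m j)
      (polyProb F n m / permProb n m) := by
  have hsum : polyProb F n m / permProb n m =
      ∑ j ∈ Finset.range (n + 1), coeff j (quotientSeries F m) * shiftRatio n m j := by
    rw [polyProb_eq_coeff, ← quotientSeries_mul_expPartial, coeff_mul,
      Finset.Nat.sum_antidiagonal_eq_sum_range_succ_mk, Finset.sum_div]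
    refine Finset.sum_congr rfl fun j hj => ?_
    rw [shiftRatio, if_pos (Finset.mem_range_succ_iff.1 hj), ← permProb_eq_coeff hm, mul_div_assoc]
  rw [hsum]
  refine hasSum_sum_of_ne_finset_zero fun j hj => ?_
  rw [shiftRatio, if_neg (by simpa using hj), mul_zero]

lemma abs_polyProb_div_permProb_sub_le {K z : ℝ} (hm : 0 < m) (hz : |z| < Fintype.card F)
    (hy : 0 < y) (hyq : y < Fintype.card F)
    (hK : ∀ k, |shiftRatio n m (m + k) - z ^ (m + k)| ≤ K * y ^ k) :
    |polyProb F n m / permProb n m - Gq F m z| ≤ K * (Gq F m y - 1) / y ^ m := by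
  have hdiff := (hasSum_quotientSeries_mul_shiftRatio (F := F) hm n).sub
    (evalsTo_quotientSeries (m := m) hz)
  have hbound := (evalsTo_quotientSeries (F := F) (m := m)
    (by rwa [abs_of_pos hy])).tail.mul_left (K / y ^ m)
  rw [coeff_zero_quotientSeries, div_mul_eq_mul_div] at hbound
  rw [← hdiff.tsum_eq, ← norm_eq_abs]
  refine tsum_of_norm_bounded hbound fun j => ?_
  rw [← mul_sub, norm_mul, norm_of_nonneg (coeff_quotientSeries_nonneg j), norm_eq_abs]
  rcases j.eq_zero_or_pos with rfl | hj
  · simp [shiftRatio, (permProb_pos n m).ne']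
  rcases le_or_gt j m with hjm | hjm
  · simp [coeff_quotientSeries_of_le hj hjm]
  obtain ⟨k, rfl⟩ := Nat.exists_eq_add_of_le hjm.le
  rw [if_neg hj.ne']
  calc _ ≤ coeff (m + k) (quotientSeries F m) * (K * y ^ k) := by
        gcongr
        · exact coeff_quotientSeries_nonneg _
        · exact hK k
    _ = _ := by
        rw [pow_add]
        field_simp

end

end Comparison

section Main

variable {F : Type} [Field F] [Fintype F] {m n : ℕ}

lemma abs_polyProb_self_div_sub_one_le (hm : 0 < m) :
    |polyProb F m m / (permProb m m * Gq F m 1) - 1| ≤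
      10 / (m * (Fintype.card F : ℝ) ^ ((m + 2) / 2)) := by
  rw [polyProb_eq_coeff, coeff_friableSeries_of_le le_rfl, permProb_eq_one le_rfl, one_mul,
    one_div, ← div_div, div_eq_mul_inv (10 / (m : ℝ)), ← inv_pow]
  refine abs_inv_Gq_one_sub_one_le.trans ?_
  have : (0 : ℝ) < m := mod_cast hm
  gcongr
  linarith

lemma mul_xi_le_sq (hm : 0 < m) (hmn : m < n) (hsize : 10 * n * log n ≤ m ^ 2) :
    10 * n * xi (n / m) ≤ m ^ 2 :=
  (mul_le_mul_of_nonneg_left (xi_le_log hm hmn hsize) (by positivity)).trans hsize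

lemma saddlePoint_le (hm : 0 < m) (hmn : m < n) (hsize : 10 * n * log n ≤ m ^ 2) :
    saddlePoint n m ≤ 5 / 4 :=
  (le_mul_of_one_le_right (saddlePoint_pos n m).le (one_le_exp (by positivity))).trans
    (saddlePoint_mul_exp_le (twenty_le_of_size hm hmn hsize) hmn.le (mul_xi_le_sq hm hmn hsize))

lemma abs_polyProb_div_permProb_sub_Gq_le (hm : 0 < m) (hmn : m < n)
    (hsize : 10 * n * log n ≤ m ^ 2) :
    |polyProb F n m / permProb n m - Gq F m (saddlePoint n m)| ≤
      3960 * log (n / m + 1) / (m * (Fintype.card F : ℝ) ^ ((m + 2) / 2)) := by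
  have hq := two_le_card (F := F)
  have hu := one_lt_cast_div_cast hm hmn
  have hm20 := twenty_le_of_size hm hmn hsize
  have hξ := mul_xi_le_sq hm hmn hsize
  have hz : |saddlePoint n m| < Fintype.card F := by
    rw [abs_of_pos (saddlePoint_pos n m)]
    linarith [saddlePoint_le hm hmn hsize]
  have hshift := abs_shiftRatio_sub_le hm hmn hξ (saddlePoint_mul_exp_le hm20 hmn.le hξ)
  have hlog : 0 ≤ log (n / m + 1 : ℝ) := log_nonneg (by linarith)
  calc |polyProb F n m / permProb n m - Gq F m (saddlePoint n m)|
      ≤ 15 * (exp (xi (n / m)) / (n / m)) * (Gq F m (5 / 4) - 1) / (5 / 4) ^ m :=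
        abs_polyProb_div_permProb_sub_le hm hz (by norm_num) (by linarith) hshift
    _ ≤ 15 * (4 * log (n / m + 1)) *
          (66 / m * ((Fintype.card F : ℝ)⁻¹) ^ ((m + 2) / 2) * (5 / 4) ^ m) / (5 / 4) ^ m := by
        have hG : 0 ≤ Gq F m (5 / 4) - 1 := sub_nonneg.2 (one_le_Gq (by norm_num) (by linarith))
        gcongr
        · exact exp_xi_div_le hu
        · exact Gq_sub_one_le (mod_cast hm20)
    _ = 3960 * log (n / m + 1) / (m * (Fintype.card F : ℝ) ^ ((m + 2) / 2)) := by
        rw [inv_pow]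
        field_simp
        ring

lemma abs_div_mul_sub_one_le {a p g : ℝ} (hp : p ≠ 0) (hg : 1 ≤ g) :
    |a / (p * g) - 1| ≤ |a / p - g| := by
  have hg0 : 0 < g := by linarith
  have heq : a / (p * g) - 1 = (a / p - g) / g := by field_simp
  rw [heq, abs_div, abs_of_pos hg0]
  exact div_le_self (abs_nonneg _) hg

end Main

end Friable

/-- There exists an absolute constant `C > 0` such that for every prime
power `q` (the cardinality of a finite field `F`) and all integers
`n ≥ m ≥ √(10·n·log n)`, writing `u = n/m`, one has
`|p_{n,m,q}/(p_{n,m}·G_q(e^{ξ(u)/m})) − 1| ≤ C·log(u+1)/(m·q^{⌈(m+1)/2⌉})`. -/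
theorem stmt10 :
    ∃ C : ℝ, 0 < C ∧ ∀ (F : Type) [Field F] [Fintype F], ∀ n m : ℕ, 1 ≤ m → m ≤ n →
      Real.sqrt (10 * (n : ℝ) * Real.log n) ≤ (m : ℝ) →
      ∀ u : ℝ, u = (n : ℝ) / (m : ℝ) →
      |polyProb F n m / (permProb n m * Gq F m (Real.exp (xi u / (m : ℝ)))) - 1| ≤
        C * Real.log (u + 1) / ((m : ℝ) * (Fintype.card F : ℝ) ^ ((m + 2) / 2)) := by
  refine ⟨3960, by norm_num, ?_⟩
  rintro F _ _ n m hm hmn hsize _ rfl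
  replace hsize : 10 * n * log n ≤ (m : ℝ) ^ 2 := (sqrt_le_iff.1 hsize).2
  rcases hmn.eq_or_lt with rfl | hmn
  · have hm0 : (m : ℝ) ≠ 0 := mod_cast (Nat.zero_lt_of_lt hm).ne'
    rw [div_self hm0, Friable.xi_one, zero_div, exp_zero, one_add_one_eq_two]
    refine (Friable.abs_polyProb_self_div_sub_one_le hm).trans ?_
    gcongr
    linarith [log_two_gt_d9]
  · have hG : 1 ≤ Gq F m (Friable.saddlePoint n m) := by
      refine Friable.one_le_Gq (Friable.saddlePoint_pos n m).le ?_
      linarith [Friable.saddlePoint_le hm hmn hsize, Friable.two_le_card (F := F)]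
    exact (Friable.abs_div_mul_sub_one_le (Friable.permProb_pos n m).ne' hG).trans
      (Friable.abs_polyProb_div_permProb_sub_Gq_le hm hmn hsize)
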